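/- arXiv:1110.0919 — 2 statements merged into one kernel-verified Lean document; each statement's English description precedes it below -/
import Mathlib

section
/- If E is an analytic equivalence relation on ℕ^ℕ all of whose equivalence classes are contained in countable unions of compact sets, then there exists a superperfect set P ⊆ ℕ^ℕ that is a partial E-transversal, i.e. distinct elements of P are E-inequivalent. -/
open Set Filter Topology MeasureTheory

/-- The set of sequences with initial segment `u` (listed backwards, as in `PiNat.res`). -/
def initialCylinder (u : List ℕ) : Set (ℕ → ℕ) := {z | PiNat.res z u.length = u}

theorem mem_initialCylinder_res (z : ℕ → ℕ) (n : ℕ) : z ∈ initialCylinder (PiNat.res z n) := by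
  simp [initialCylinder, PiNat.res_length]

theorem initialCylinder_res (z : ℕ → ℕ) (n : ℕ) :
    initialCylinder (PiNat.res z n) = PiNat.cylinder z n := by
  simp [initialCylinder, PiNat.cylinder_eq_res, PiNat.res_length]

theorem initialCylinder_eq_cylinder {u : List ℕ} {z : ℕ → ℕ} (hz : z ∈ initialCylinder u) :
    initialCylinder u = PiNat.cylinder z u.length := by
  have h : PiNat.res z u.length = u := hz
  rw [← initialCylinder_res, h]

theorem exists_cylinder_subset {z : ℕ → ℕ} {U : Set (ℕ → ℕ)} (hU : U ∈ 𝓝 z) :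
    ∃ n, PiNat.cylinder z n ⊆ U := by
  obtain ⟨_, ⟨y, n, rfl⟩, hz, hs⟩ :=
    (PiNat.isTopologicalBasis_cylinders fun _ : ℕ => ℕ).mem_nhds_iff.1 hU
  exact ⟨n, (PiNat.mem_cylinder_iff_eq.1 hz).symm ▸ hs⟩

theorem exists_measurable_dominating {X ι : Type*} [MeasurableSpace X] [Countable ι]
    (g : ι → X → ℕ → ℕ) (hg : ∀ i, Measurable (g i)) :
    ∃ G : X → ℕ → ℕ, Measurable G ∧ ∀ i x, ∀ᶠ n in atTop, g i x n ≤ G x n := by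
  rcases isEmpty_or_nonempty ι with hι | hι
  · exact ⟨fun _ _ => 0, measurable_const, fun i => hι.elim i⟩
  obtain ⟨e, he⟩ := exists_surjective_nat ι
  refine ⟨fun x n => ∑ k ∈ Finset.range (n + 1), g (e k) x n, ?_, fun i x => ?_⟩
  · exact measurable_pi_lambda _ fun n =>
      Finset.measurable_sum _ fun k _ => (measurable_pi_apply n).comp (hg (e k))
  · obtain ⟨k, rfl⟩ := he i
    filter_upwards [eventually_ge_atTop k] with n hn
    exact Finset.single_le_sum (f := fun k => g (e k) x n) (fun _ _ => Nat.zero_le _)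
      (Finset.mem_range.2 (Nat.lt_succ_of_le hn))

theorem IsCompact.exists_forall_apply_le {K : Set (ℕ → ℕ)} (hK : IsCompact K) :
    ∃ b : ℕ → ℕ, ∀ y ∈ K, ∀ k, y k ≤ b k := by
  choose b hb using fun k => (hK.image (continuous_apply k)).bddAbove
  exact ⟨b, fun y hy k => hb k ⟨y, hy, rfl⟩⟩

theorem eq_of_mem_closure_image_cylinder {X : Type*} [TopologicalSpace X] [T2Space X]
    {f₁ : (ℕ → ℕ) → X} (hf₁ : Continuous f₁) {x : X} {z : ℕ → ℕ}
    (h : ∀ n, x ∈ closure (f₁ '' PiNat.cylinder z n)) : f₁ z = x := by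
  by_contra hne
  obtain ⟨U, V, hU, hV, hzU, hxV, hUV⟩ := t2_separation hne
  obtain ⟨n, hn⟩ := exists_cylinder_subset (hf₁.continuousAt.preimage_mem_nhds (hU.mem_nhds hzU))
  obtain ⟨_, hV', z', hz', rfl⟩ := mem_closure_iff.1 (h n) V hV hxV
  exact disjoint_left.1 hUV (hn hz') hV'

/-- A decreasing sequence of nonempty cylinders given by longer and longer initial segments
shrinks to a point. -/
theorem exists_forall_mem_initialCylinder {u : ℕ → List ℕ}
    (hlen : ∀ n, (u n).length < (u (n + 1)).length)
    (hsub : ∀ n, initialCylinder (u (n + 1)) ⊆ initialCylinder (u n))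
    (hne : ∀ n, (initialCylinder (u n)).Nonempty) : ∃ z, ∀ n, z ∈ initialCylinder (u n) := by
  choose w hw using hne
  have hanti : Antitone fun n => initialCylinder (u n) := antitone_nat_of_succ_le hsub
  have hlen' : ∀ n, n ≤ (u n).length := fun _ => (strictMono_nat_of_lt_succ hlen).le_apply
  have hagree : ∀ m n, m ≤ n → ∀ i < (u m).length, w n i = w m i := fun m n hmn => by
    have : w n ∈ initialCylinder (u m) := hanti hmn (hw n)
    rwa [initialCylinder_eq_cylinder (hw m)] at this
  refine ⟨fun i => w (i + 1) i, fun n => ?_⟩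
  rw [initialCylinder_eq_cylinder (hw n)]
  intro i hi
  rcases le_total n (i + 1) with h | h
  · exact hagree _ _ h i hi
  · exact (hagree _ _ h i (hlen' (i + 1))).symm

section Bounding

variable {X : Type*} [TopologicalSpace X] [MeasurableSpace X]

/-- For generic `x ∈ W`, the values of `f₂` on the part of the fibre of `f₁` over `x` lying in `S`
are eventually dominated by a sequence depending measurably on `x`. -/
def GenericallyBounded (f₁ : (ℕ → ℕ) → X) (f₂ : (ℕ → ℕ) → ℕ → ℕ) (S : Set (ℕ → ℕ))
    (W : Set X) : Prop :=
  ∃ g : X → ℕ → ℕ, Measurable g ∧ ∀ᶠ x in residual X, x ∈ W → ∀ z ∈ S, f₁ z = x →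
    ∀ᶠ n in atTop, f₂ z n ≤ g x n

/-- The largest open set over which `f₂` is generically bounded on `S`. -/
def boundedPart (f₁ : (ℕ → ℕ) → X) (f₂ : (ℕ → ℕ) → ℕ → ℕ) (S : Set (ℕ → ℕ)) : Set X :=
  ⋃₀ {W | IsOpen W ∧ GenericallyBounded f₁ f₂ S W}

variable {f₁ : (ℕ → ℕ) → X} {f₂ : (ℕ → ℕ) → ℕ → ℕ} {S : Set (ℕ → ℕ)}

theorem isOpen_boundedPart : IsOpen (boundedPart f₁ f₂ S) :=
  isOpen_sUnion fun _ h => h.1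

theorem GenericallyBounded.sUnion {𝒲 : Set (Set X)} (hc : 𝒲.Countable)
    (h : ∀ W ∈ 𝒲, GenericallyBounded f₁ f₂ S W) : GenericallyBounded f₁ f₂ S (⋃₀ 𝒲) := by
  have := hc.to_subtype
  choose g hg hb using fun W : 𝒲 => h W W.2
  obtain ⟨G, hG, hd⟩ := exists_measurable_dominating g hg
  refine ⟨G, hG, ?_⟩
  filter_upwards [eventually_countable_forall.2 hb] with x hx hxW z hz hzx
  obtain ⟨W, hW, hxW⟩ := hxW
  filter_upwards [hx ⟨W, hW⟩ hxW z hz hzx, hd ⟨W, hW⟩ x] with n h₁ h₂ using h₁.trans h₂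

theorem genericallyBounded_boundedPart [SecondCountableTopology X] :
    GenericallyBounded f₁ f₂ S (boundedPart f₁ f₂ S) := by
  obtain ⟨T, hT, hsub, hU⟩ := TopologicalSpace.isOpen_sUnion_countable
    {W | IsOpen W ∧ GenericallyBounded f₁ f₂ S W} fun _ h => h.1
  rw [boundedPart, ← hU]
  exact .sUnion hT fun W hW => (hsub hW).2

/-- The values of `f₂` at the coordinate `k` taken on some proper subcylinder of
`initialCylinder u` on which `f₂ · k` is constant and `f₂` is not generically bounded near `x`. -/
def persistentValues (f₁ : (ℕ → ℕ) → X) (f₂ : (ℕ → ℕ) → ℕ → ℕ) (u : List ℕ) (x : X) (k : ℕ) :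
    Set ℕ :=
  {a | ∃ v : List ℕ, u.length < v.length ∧ initialCylinder v ⊆ initialCylinder u ∧
    x ∉ boundedPart f₁ f₂ (initialCylinder v) ∧ ∀ z ∈ initialCylinder v, f₂ z k = a}

theorem measurableSet_mem_persistentValues [OpensMeasurableSpace X] (u : List ℕ) (k a : ℕ) :
    MeasurableSet {x : X | a ∈ persistentValues f₁ f₂ u x k} := by
  have : {x : X | a ∈ persistentValues f₁ f₂ u x k} = ⋃ v : List ℕ,
      {_x | u.length < v.length ∧ initialCylinder v ⊆ initialCylinder u ∧
        ∀ z ∈ initialCylinder v, f₂ z k = a} ∩ (boundedPart f₁ f₂ (initialCylinder v))ᶜ := by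
    ext x
    simp only [persistentValues, mem_ofPred_eq, mem_iUnion, mem_inter_iff, mem_compl_iff]
    grind
  rw [this]
  exact .iUnion fun v => (MeasurableSet.const _).inter isOpen_boundedPart.measurableSet.compl

/-- The points of the complement of the bounded part of `initialCylinder u` over which, below `u`,
only finitely many persistent values occur at each coordinate. -/
def finitelyBranchingPart (f₁ : (ℕ → ℕ) → X) (f₂ : (ℕ → ℕ) → ℕ → ℕ) (u : List ℕ) : Set X :=
  {x | x ∉ boundedPart f₁ f₂ (initialCylinder u) ∧
    ∀ k, BddAbove (persistentValues f₁ f₂ u x k)}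

theorem measurableSet_finitelyBranchingPart [OpensMeasurableSpace X] (u : List ℕ) :
    MeasurableSet (finitelyBranchingPart f₁ f₂ u : Set X) := by
  have : {x : X | ∀ k, BddAbove (persistentValues f₁ f₂ u x k)} =
      ⋂ k, ⋃ b, ⋂ a, {x | a ∈ persistentValues f₁ f₂ u x k}ᶜ ∪ {_x | a ≤ b} := by
    ext x
    simp [BddAbove, upperBounds, Set.Nonempty, imp_iff_not_or]
  refine isOpen_boundedPart.measurableSet.compl.inter (this ▸ ?_ : MeasurableSet {x : X | ∀ k, _})
  exact .iInter fun k => .iUnion fun b => .iInter fun a =>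
    (measurableSet_mem_persistentValues u k a).compl.union (.const _)

theorem measurable_sSup_persistentValues [OpensMeasurableSpace X] (u : List ℕ) (k : ℕ) :
    Measurable fun x : X => sSup (persistentValues f₁ f₂ u x k) := by
  refine measurable_of_Ioi fun c => ?_
  have : (fun x : X => sSup (persistentValues f₁ f₂ u x k)) ⁻¹' Ioi c =
      (⋃ a, ⋃ _ : c < a, {x | a ∈ persistentValues f₁ f₂ u x k}) ∩
      (⋃ b, ⋂ a, {x | a ∈ persistentValues f₁ f₂ u x k}ᶜ ∪ {_x | a ≤ b}) := by
    ext x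
    simp only [mem_preimage, mem_Ioi, mem_inter_iff, mem_iUnion, mem_iInter, mem_union,
      mem_compl_iff, mem_ofPred_eq, exists_prop, ← imp_iff_not_or]
    constructor
    · intro h
      have hb : BddAbove (persistentValues f₁ f₂ u x k) := by
        by_contra hb
        simp [csSup_of_not_bddAbove hb] at h
      have hne : (persistentValues f₁ f₂ u x k).Nonempty := by
        by_contra hne
        simp [not_nonempty_iff_eq_empty.1 hne] at h
      exact ⟨⟨_, h, Nat.sSup_mem hne hb⟩, hb.imp fun b hb a ha => hb ha⟩
    · rintro ⟨⟨a, hca, ha⟩, b, hb⟩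
      exact hca.trans_le (le_csSup ⟨b, fun a ha => hb a ha⟩ ha)
  rw [this]
  exact (MeasurableSet.iUnion fun a => .iUnion fun _ =>
    measurableSet_mem_persistentValues u k a).inter (.iUnion fun b => .iInter fun a =>
    (measurableSet_mem_persistentValues u k a).compl.union (.const _))

theorem genericallyBounded_finitelyBranchingPart [SecondCountableTopology X]
    [OpensMeasurableSpace X] (hf₂ : Continuous f₂) (u : List ℕ) :
    GenericallyBounded f₁ f₂ (initialCylinder u) (finitelyBranchingPart f₁ f₂ u) := by
  choose g hg hb using fun v : List ℕ =>
    genericallyBounded_boundedPart (f₁ := f₁) (f₂ := f₂) (S := initialCylinder v)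
  obtain ⟨G, hG, hd⟩ := exists_measurable_dominating g hg
  refine ⟨fun x k => G x k + sSup (persistentValues f₁ f₂ u x k), ?_, ?_⟩
  · exact measurable_pi_lambda _ fun k =>
      ((measurable_pi_apply k).comp hG).add (measurable_sSup_persistentValues u k)
  filter_upwards [eventually_countable_forall.2 hb] with x hx hxB z hz hzx
  by_cases h : ∃ n, x ∈ boundedPart f₁ f₂ (initialCylinder (PiNat.res z n))
  · obtain ⟨n, hn⟩ := h
    filter_upwards [hx _ hn z (mem_initialCylinder_res z n) hzx, hd (PiNat.res z n) x]
      with k h₁ h₂ using (h₁.trans h₂).trans (Nat.le_add_right _ _)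
  · push Not at h
    refine .of_forall fun k => le_add_left (le_csSup (hxB.2 k) ?_)
    have hU : {z' | f₂ z' k = f₂ z k} ∈ 𝓝 z :=
      ((continuous_apply k).comp hf₂).continuousAt.preimage_mem_nhds
        ((isOpen_discrete {f₂ z k}).mem_nhds rfl)
    obtain ⟨n, hn⟩ := exists_cylinder_subset hU
    refine ⟨PiNat.res z (max n (u.length + 1)), ?_, ?_, h _, ?_⟩
    · rw [PiNat.res_length]
      omega
    · rw [initialCylinder_res, initialCylinder_eq_cylinder hz]
      exact PiNat.cylinder_anti _ (by omega)
    · rw [initialCylinder_res]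
      exact fun z' hz' => hn (PiNat.cylinder_anti _ (le_max_left _ _) hz')

theorem isMeagre_finitelyBranchingPart [SecondCountableTopology X] [BorelSpace X]
    (hf₂ : Continuous f₂) (u : List ℕ) :
    IsMeagre (finitelyBranchingPart f₁ f₂ u : Set X) := by
  obtain ⟨U, hU, hBU⟩ :=
    (measurableSet_finitelyBranchingPart (f₁ := f₁) (f₂ := f₂) u).residualEq_isOpen
  have hsub : U ⊆ boundedPart f₁ f₂ (initialCylinder u) := by
    obtain ⟨g, hg, hb⟩ := genericallyBounded_finitelyBranchingPart (f₁ := f₁) hf₂ u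
    refine subset_sUnion_of_mem ⟨hU, g, hg, ?_⟩
    filter_upwards [hb, hBU.mem_iff] with x hx hxU hxmem using hx (hxU.2 hxmem)
  have : ∀ᶠ x in residual X, x ∉ finitelyBranchingPart f₁ f₂ u := by
    filter_upwards [hBU.mem_iff] with x hx hxB using hxB.1 (hsub (hx.1 hxB))
  exact this

theorem mem_closure_image_of_notMem_boundedPart {x : X} (hx : x ∉ boundedPart f₁ f₂ S) :
    x ∈ closure (f₁ '' S) := by
  by_contra h
  refine hx ⟨_, ⟨isClosed_closure.isOpen_compl, fun _ _ => 0, measurable_const, ?_⟩, h⟩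
  refine .of_forall fun y hy z hz hzy => (hy (subset_closure ⟨z, hz, hzy⟩)).elim

/-- If the images under `f₂` of the fibres of `f₁` are covered by countably many compact sets, then
over generic points they are eventually dominated by a measurably chosen sequence. -/
theorem exists_measurable_generic_bound [SecondCountableTopology X] [BorelSpace X] [T2Space X]
    (hf₁ : Continuous f₁) (hf₂ : Continuous f₂)
    (h : ∀ x, ∃ K : ℕ → Set (ℕ → ℕ), (∀ n, IsCompact (K n)) ∧ f₂ '' (f₁ ⁻¹' {x}) ⊆ ⋃ n, K n) :
    ∃ g : X → ℕ → ℕ, Measurable g ∧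
      ∀ᶠ x in residual X, ∀ z, f₁ z = x → ∀ᶠ n in atTop, f₂ z n ≤ g x n := by
  obtain ⟨g, hg, hb⟩ :=
    genericallyBounded_boundedPart (f₁ := f₁) (f₂ := f₂) (S := initialCylinder [])
  refine ⟨g, hg, ?_⟩
  have hgen : ∀ᶠ x in residual X, ∀ u, x ∉ finitelyBranchingPart f₁ f₂ u :=
    eventually_countable_forall.2 fun u => isMeagre_finitelyBranchingPart hf₂ u
  filter_upwards [hb, hgen] with x hx hxB z hzx
  refine hx ?_ z rfl hzx
  by_contra hx₀
  obtain ⟨K, hK, hcov⟩ := h x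
  choose b hKb using fun n => (hK n).exists_forall_apply_le
  let D := {u : List ℕ // x ∉ boundedPart f₁ f₂ (initialCylinder u)}
  have step : ∀ (n : ℕ) (u : D), ∃ v : D, u.1.length < v.1.length ∧
      initialCylinder v.1 ⊆ initialCylinder u.1 ∧
      ∃ k, ∀ z ∈ initialCylinder v.1, b n k < f₂ z k := by
    rintro n ⟨u, hu⟩
    have : ∃ k, ¬ BddAbove (persistentValues f₁ f₂ u x k) := by
      by_contra! hbdd
      exact hxB u ⟨hu, hbdd⟩
    obtain ⟨k, hk⟩ := this
    obtain ⟨a, ⟨v, hl, hs, hv, hva⟩, hba⟩ := not_bddAbove_iff.1 hk (b n k)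
    exact ⟨⟨v, hv⟩, hl, hs, k, fun z hz => (hva z hz).symm ▸ hba⟩
  choose next hlen hsub hesc using step
  let u : ℕ → D := fun n => n.rec ⟨[], hx₀⟩ fun n u => next n u
  obtain ⟨w, hw⟩ := exists_forall_mem_initialCylinder (u := fun n => (u n).1)
    (fun n => hlen n (u n)) (fun n => hsub n (u n)) fun n =>
      (closure_nonempty_iff.1 ⟨x, mem_closure_image_of_notMem_boundedPart (u n).2⟩).of_image
  have hwx : f₁ w = x := by
    refine eq_of_mem_closure_image_cylinder hf₁ fun n => ?_
    have hn : n ≤ (u n).1.length :=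
      (strictMono_nat_of_lt_succ (f := fun n => (u n).1.length)
        fun n => hlen n (u n)).le_apply
    refine closure_mono (image_mono ?_) (mem_closure_image_of_notMem_boundedPart (u n).2)
    rw [initialCylinder_eq_cylinder (hw n)]
    exact PiNat.cylinder_anti _ hn
  obtain ⟨n, hn⟩ := mem_iUnion.1 (hcov ⟨w, hwx, rfl⟩)
  obtain ⟨k, hk⟩ := hesc n (u n)
  exact (hk w (hw (n + 1))).not_ge (hKb n _ hn k)

end Bounding

/-- A measurable function into `ℕ → ℕ` has coordinates that are locally bounded on a suitable
intersection of countably many dense open sets. -/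
theorem exists_denseOpen_locally_bounded {X : Type*} [TopologicalSpace X] [BaireSpace X]
    [MeasurableSpace X] [BorelSpace X] {g : X → ℕ → ℕ} (hg : Measurable g) {R : Set X}
    (hR : R ∈ residual X) :
    ∃ O : ℕ → Set X, (∀ i, IsOpen (O i)) ∧ (∀ i, Dense (O i)) ∧ ⋂ i, O i ⊆ R ∧
      ∀ U : Set X, IsOpen U → U.Nonempty → ∀ n, ∃ V ⊆ U, IsOpen V ∧ V.Nonempty ∧
        ∃ M, ∀ x ∈ V, x ∈ ⋂ i, O i → g x n ≤ M := by
  have hmeas (n a : ℕ) : MeasurableSet {x | g x n = a} :=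
    ((measurable_pi_apply n).comp hg) (measurableSet_singleton a)
  choose W hW hgW using fun n a => (hmeas n a).residualEq_isOpen
  have hR' : {x | x ∈ R ∧ ∀ n a, g x n = a ↔ x ∈ W n a} ∈ residual X := by
    filter_upwards [hR, eventually_countable_forall.2 fun n =>
      eventually_countable_forall.2 fun a => (hgW n a).mem_iff] with x h₁ h₂ using ⟨h₁, h₂⟩
  obtain ⟨S, hSo, hSd, hSc, hSR⟩ := mem_residual_iff.1 hR'
  obtain ⟨O, hO⟩ := (hSc.insert univ).exists_eq_range (insert_nonempty _ _)
  have hmem (i : ℕ) : O i = univ ∨ O i ∈ S := by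
    have : O i ∈ insert univ S := hO ▸ mem_range_self i
    exact this
  have hOo (i : ℕ) : IsOpen (O i) := (hmem i).elim (fun h => h ▸ isOpen_univ) (hSo _)
  have hOd (i : ℕ) : Dense (O i) := (hmem i).elim (fun h => h ▸ dense_univ) (hSd _)
  have hOR : ⋂ i, O i ⊆ {x | x ∈ R ∧ ∀ n a, g x n = a ↔ x ∈ W n a} := by
    rw [← sInter_range, ← hO]
    exact (sInter_subset_sInter (subset_insert _ _)).trans hSR
  refine ⟨O, hOo, hOd, fun x hx => (hOR hx).1, fun U hU hne n => ?_⟩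
  obtain ⟨x, hxU, hx⟩ := (dense_iInter_of_isOpen hOo hOd).inter_open_nonempty U hU hne
  refine ⟨U ∩ W n (g x n), inter_subset_left, hU.inter (hW _ _),
    ⟨x, hxU, ((hOR hx).2 n _).1 rfl⟩, g x n, fun y hy hyO => ?_⟩
  exact (((hOR hyO).2 n _).2 hy.2).le

section Fusion

variable {O : ℕ → Set (ℕ → ℕ)} {g : (ℕ → ℕ) → ℕ → ℕ}

theorem exists_open_subset_bounded (hOo : ∀ i, IsOpen (O i)) (hOd : ∀ i, Dense (O i))
    (hloc : ∀ U : Set (ℕ → ℕ), IsOpen U → U.Nonempty → ∀ n, ∃ V ⊆ U, IsOpen V ∧ V.Nonempty ∧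
      ∃ M, ∀ x ∈ V, x ∈ ⋂ i, O i → g x n ≤ M)
    {U : Set (ℕ → ℕ)} (hU : IsOpen U) (hne : U.Nonempty) (L : ℕ) :
    ∃ V ⊆ U, IsOpen V ∧ V.Nonempty ∧ (∀ i < L, V ⊆ O i) ∧
      ∃ M, ∀ x ∈ V, x ∈ ⋂ i, O i → ∀ n < L, g x n ≤ M := by
  induction L with
  | zero => exact ⟨U, Subset.rfl, hU, hne, by simp, 0, by simp⟩
  | succ L ih =>
    obtain ⟨V, hVU, hV, hVne, hVO, M, hM⟩ := ih
    obtain ⟨V', hV'V, hV', hV'ne, M', hM'⟩ := hloc (V ∩ O L) (hV.inter (hOo L))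
      ((hOd L).inter_open_nonempty V hV hVne) L
    refine ⟨V', fun x hx => hVU (hV'V hx).1, hV', hV'ne, fun i hi x hx => ?_, max M M',
      fun x hx hxO n hn => ?_⟩
    · rcases Nat.lt_succ_iff_lt_or_eq.1 hi with hi | rfl
      exacts [hVO i hi (hV'V hx).1, (hV'V hx).2]
    · rcases Nat.lt_succ_iff_lt_or_eq.1 hn with hn | rfl
      exacts [(hM x (hV'V hx).1 hxO n hn).trans (le_max_left _ _),
        (hM' x hx hxO).trans (le_max_right _ _)]

theorem exists_cylinder_extension (hOo : ∀ i, IsOpen (O i)) (hOd : ∀ i, Dense (O i))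
    (hloc : ∀ U : Set (ℕ → ℕ), IsOpen U → U.Nonempty → ∀ n, ∃ V ⊆ U, IsOpen V ∧ V.Nonempty ∧
      ∃ M, ∀ x ∈ V, x ∈ ⋂ i, O i → g x n ≤ M)
    (w : ℕ → ℕ) (l n m L : ℕ) :
    ∃ (w' : ℕ → ℕ) (l' M : ℕ), l < l' ∧ w' ∈ PiNat.cylinder w l ∧ (Nat.unpair (w' l)).1 = n ∧
      m < w' l ∧ (∀ i < L, PiNat.cylinder w' l' ⊆ O i) ∧
      ∀ x ∈ PiNat.cylinder w' l', x ∈ ⋂ i, O i → ∀ n < L, g x n ≤ M := by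
  obtain ⟨V, hVU, hV, ⟨w', hw'⟩, hVO, M, hM⟩ := exists_open_subset_bounded hOo hOd hloc
    (PiNat.isOpen_cylinder _ (Function.update w l (Nat.pair n (m + 1))) (l + 1))
    ⟨_, PiNat.self_mem_cylinder _ _⟩ L
  obtain ⟨k, hk⟩ := exists_cylinder_subset (hV.mem_nhds hw')
  have hsub : PiNat.cylinder w' (max k (l + 1)) ⊆ V :=
    (PiNat.cylinder_anti _ (le_max_left _ _)).trans hk
  have hval : w' l = Nat.pair n (m + 1) := by simpa using hVU hw' l (Nat.lt_succ_self l)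
  refine ⟨w', max k (l + 1), M, by omega, fun i hi => ?_, by simp [hval], ?_,
    fun i hi => hsub.trans (hVO i hi), fun x hx => hM x (hsub hx)⟩
  · simpa [hi.ne] using hVU hw' i (hi.trans (Nat.lt_succ_self l))
  · exact hval ▸ Nat.right_le_pair n (m + 1)

/-- A tree of cylinders `PiNat.cylinder (w k) (l k)`, in which the node `Nat.pair n j + 1` is the
`n`-th child of the node `j`. The value at which a node branches off its parent exceeds all bounds
on `g` decided at earlier nodes. -/
structure FusionTree (O : ℕ → Set (ℕ → ℕ)) (g : (ℕ → ℕ) → ℕ → ℕ) where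
  /-- a point of the cylinder of each node -/
  w : ℕ → ℕ → ℕ
  /-- the length of the cylinder of each node -/
  l : ℕ → ℕ
  /-- the bound on `g` decided at each node -/
  M : ℕ → ℕ
  length_lt : ∀ n j, l j < l (Nat.pair n j + 1)
  mem_cylinder : ∀ n j, w (Nat.pair n j + 1) ∈ PiNat.cylinder (w j) (l j)
  unpair_apply : ∀ n j, (Nat.unpair (w (Nat.pair n j + 1) (l j))).1 = n
  lt_apply : ∀ n j, M (Nat.pair n j) < w (Nat.pair n j + 1) (l j)
  cylinder_subset : ∀ k, ∀ i ≤ k, PiNat.cylinder (w (k + 1)) (l (k + 1)) ⊆ O i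
  le_bound : ∀ k, ∀ x ∈ PiNat.cylinder (w (k + 1)) (l (k + 1)), x ∈ ⋂ i, O i →
    ∀ n ≤ M k, g x n ≤ M (k + 1)
  length_le : ∀ k, l k ≤ M k
  bound_mono : Monotone M

theorem nonempty_fusionTree (hOo : ∀ i, IsOpen (O i)) (hOd : ∀ i, Dense (O i))
    (hloc : ∀ U : Set (ℕ → ℕ), IsOpen U → U.Nonempty → ∀ n, ∃ V ⊆ U, IsOpen V ∧ V.Nonempty ∧
      ∃ M, ∀ x ∈ V, x ∈ ⋂ i, O i → g x n ≤ M) :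
    Nonempty (FusionTree O g) := by
  choose w' l' M' hl hw hn hm hO hM using exists_cylinder_extension hOo hOd hloc
  -- the state consists of the cylinders chosen so far and of the current bound
  let next (k : ℕ) (s : (ℕ → (ℕ → ℕ) × ℕ) × ℕ) : (ℕ → (ℕ → ℕ) × ℕ) × ℕ :=
    let p := s.1 (Nat.unpair k).2
    let n := (Nat.unpair k).1
    let L := max s.2 k + 1
    (Function.update s.1 (k + 1) (w' p.1 p.2 n s.2 L, l' p.1 p.2 n s.2 L),
      max (max (M' p.1 p.2 n s.2 L) s.2) (l' p.1 p.2 n s.2 L))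
  let st : ℕ → (ℕ → (ℕ → ℕ) × ℕ) × ℕ := fun k => k.rec (fun _ => (0, 0), 0) next
  have hst (k : ℕ) : st (k + 1) = next k (st k) := rfl
  have hold (j k : ℕ) (hjk : j ≤ k) : (st k).1 j = (st j).1 j := by
    induction k, hjk using Nat.le_induction with
    | base => rfl
    | succ k hjk ih =>
      rw [hst, ← ih]
      exact Function.update_of_ne (by omega) _ _
  let q (k : ℕ) : (ℕ → ℕ) × ℕ := (st k).1 k
  have hq (n j : ℕ) : q (Nat.pair n j + 1) =
      (w' (q j).1 (q j).2 n (st (Nat.pair n j)).2 (max (st (Nat.pair n j)).2 (Nat.pair n j) + 1),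
       l' (q j).1 (q j).2 n (st (Nat.pair n j)).2
        (max (st (Nat.pair n j)).2 (Nat.pair n j) + 1)) := by
    have := hold j (Nat.pair n j) (Nat.right_le_pair n j)
    simp only [q, hst, next, Function.update_self, Nat.unpair_pair, this]
  have hb (n j : ℕ) : (st (Nat.pair n j + 1)).2 = max (max
      (M' (q j).1 (q j).2 n (st (Nat.pair n j)).2 (max (st (Nat.pair n j)).2 (Nat.pair n j) + 1))
      (st (Nat.pair n j)).2) (q (Nat.pair n j + 1)).2 := by
    have := hold j (Nat.pair n j) (Nat.right_le_pair n j)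
    rw [hq]
    simp only [q, hst, next, Nat.unpair_pair, this]
  refine ⟨⟨fun k => (q k).1, fun k => (q k).2, fun k => (st k).2, ?_, ?_, ?_, ?_, ?_, ?_, ?_, ?_⟩⟩
  · intro n j
    simp only [hq n j]
    exact hl ..
  · intro n j
    simp only [hq n j]
    exact hw (q j).1 (q j).2 n _ _
  · intro n j
    simp only [hq n j]
    exact hn ..
  · intro n j
    simp only [hq n j]
    exact hm ..
  · intro k i hi
    obtain ⟨n, j, rfl⟩ : ∃ n j, k = Nat.pair n j := ⟨_, _, (Nat.pair_unpair k).symm⟩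
    simp only [hq n j]
    exact hO _ _ _ _ _ _ (by omega)
  · intro k x hx hxO i hi
    obtain ⟨n, j, rfl⟩ : ∃ n j, k = Nat.pair n j := ⟨_, _, (Nat.pair_unpair k).symm⟩
    simp only [hq n j] at hx
    simp only [hb n j]
    have := hM _ _ _ _ _ x hx hxO i (by omega)
    omega
  · intro k
    cases k with
    | zero => rfl
    | succ k =>
      obtain ⟨n, j, rfl⟩ : ∃ n j, k = Nat.pair n j := ⟨_, _, (Nat.pair_unpair k).symm⟩
      simp only [hb n j]
      exact le_max_right _ _
  · refine monotone_nat_of_le_succ fun k => ?_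
    obtain ⟨n, j, rfl⟩ : ∃ n j, k = Nat.pair n j := ⟨_, _, (Nat.pair_unpair k).symm⟩
    simp only [hb n j]
    omega

/-- The nodes on the branch `x`. -/
def branchNode (x : ℕ → ℕ) : ℕ → ℕ
  | 0 => 0
  | i + 1 => Nat.pair (x i) (branchNode x i) + 1

theorem strictMono_branchNode (x : ℕ → ℕ) : StrictMono (branchNode x) :=
  strictMono_nat_of_lt_succ fun _ => Nat.lt_succ_of_le (Nat.right_le_pair _ _)

theorem eq_of_branchNode_eq {x y : ℕ → ℕ} {i j : ℕ} (h : branchNode x i = branchNode y j) :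
    ∀ t < i, x t = y t := by
  suffices i = j ∧ ∀ t < i, x t = y t from this.2
  induction i generalizing j with
  | zero => cases j <;> simp_all [branchNode]
  | succ i ih =>
    cases j with
    | zero => simp [branchNode] at h
    | succ j =>
      obtain ⟨h₁, h₂⟩ := Nat.pair_eq_pair.1 (Nat.succ_injective h)
      obtain ⟨rfl, h₃⟩ := ih h₂
      refine ⟨rfl, fun t ht => ?_⟩
      rcases Nat.lt_succ_iff_lt_or_eq.1 ht with ht | rfl
      exacts [h₃ t ht, h₁]

theorem continuous_branchNode (i : ℕ) : Continuous fun x => branchNode x i := by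
  induction i with
  | zero => exact continuous_const
  | succ i ih =>
    exact (continuous_of_discreteTopology (f := fun p : ℕ × ℕ => Nat.pair p.1 p.2 + 1)).comp
      ((continuous_apply i).prodMk ih)

theorem exists_interleaving {a b : ℕ → ℕ} (ha : StrictMono a) (hb : StrictMono b) {N : ℕ}
    (hne : ∀ i ≥ N, ∀ j, a i ≠ b j) (i₀ : ℕ) : ∃ i ≥ i₀, ∃ j, a i < b j ∧ b j < a (i + 1) := by
  obtain ⟨j, hj⟩ : ∃ j, a (max i₀ N) < b j := ⟨_, (Nat.lt_succ_self _).trans_le hb.le_apply⟩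
  have hex : ∃ m, b j ≤ a m := ⟨_, ha.le_apply⟩
  obtain ⟨i, hi⟩ : ∃ i, Nat.find hex = i + 1 := Nat.exists_eq_add_one_of_ne_zero fun h0 =>
    absurd (h0 ▸ Nat.find_spec hex) ((ha.monotone (Nat.zero_le _)).trans_lt hj).not_ge
  have h₁ : a i < b j := not_le.1 (Nat.find_min hex (by omega))
  have h₂ : b j ≤ a (i + 1) := hi ▸ Nat.find_spec hex
  have h₃ : max i₀ N < i + 1 := ha.lt_iff_lt.1 (hj.trans_le h₂)
  exact ⟨i, by omega, j, h₁, h₂.lt_of_ne (hne (i + 1) (by omega) j).symm⟩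

theorem Continuous.apply_apply {X : Type*} [TopologicalSpace X] {f : X → ℕ → ℕ} {c : X → ℕ}
    (hf : Continuous f) (hc : Continuous c) : Continuous fun x => f x (c x) := by
  refine continuous_iff_continuousAt.2 fun x =>
    ((continuous_apply (c x)).comp hf).continuousAt.congr ?_
  filter_upwards [hc.continuousAt.preimage_mem_nhds ((isOpen_discrete {c x}).mem_nhds rfl)]
    with y hy
  rw [mem_preimage, mem_singleton_iff] at hy
  simp [hy]

namespace FusionTree

variable (T : FusionTree O g)

theorem strictMono_length_branchNode (x : ℕ → ℕ) : StrictMono fun i => T.l (branchNode x i) :=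
  strictMono_nat_of_lt_succ fun _ => T.length_lt _ _

/-- The point determined by the branch `x` of the tree. -/
def point (x : ℕ → ℕ) : ℕ → ℕ := fun i => T.w (branchNode x (i + 1)) i

theorem point_mem_cylinder (x : ℕ → ℕ) (i : ℕ) :
    T.point x ∈ PiNat.cylinder (T.w (branchNode x i)) (T.l (branchNode x i)) := by
  have hagree (m n : ℕ) (hmn : m ≤ n) :
      T.w (branchNode x n) ∈ PiNat.cylinder (T.w (branchNode x m)) (T.l (branchNode x m)) := by
    induction n, hmn using Nat.le_induction with
    | base => exact PiNat.self_mem_cylinder _ _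
    | succ n hmn ih =>
      intro t ht
      exact (T.mem_cylinder _ _ t
        (ht.trans_le ((T.strictMono_length_branchNode x).monotone hmn))).trans (ih t ht)
  intro t ht
  rcases le_total i (t + 1) with h | h
  · exact hagree _ _ h t ht
  · exact (hagree _ _ h t ((Nat.lt_succ_self t).trans_le
      (T.strictMono_length_branchNode x).le_apply)).symm

theorem point_apply_length (x : ℕ → ℕ) (i : ℕ) :
    T.point x (T.l (branchNode x i)) = T.w (branchNode x (i + 1)) (T.l (branchNode x i)) :=
  T.point_mem_cylinder x (i + 1) _ (T.length_lt _ _)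

theorem continuous_point : Continuous T.point :=
  continuous_pi fun i => (continuous_of_discreteTopology (f := fun k => T.w k i)).comp
    (continuous_branchNode (i + 1))

/-- The node reached after reading the first `i` branching values off `y`. -/
def readNode (y : ℕ → ℕ) : ℕ → ℕ
  | 0 => 0
  | i + 1 => Nat.pair (Nat.unpair (y (T.l (readNode y i)))).1 (readNode y i) + 1

/-- The branch read off `y`. -/
def read (y : ℕ → ℕ) : ℕ → ℕ := fun i => (Nat.unpair (y (T.l (T.readNode y i)))).1

theorem continuous_apply_length_readNode (i : ℕ) (h : Continuous fun y => T.readNode y i) :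
    Continuous fun y : ℕ → ℕ => (Nat.unpair (y (T.l (T.readNode y i)))).1 :=
  (continuous_of_discreteTopology (f := fun n => (Nat.unpair n).1)).comp
    (continuous_id.apply_apply (continuous_of_discreteTopology.comp h))

theorem continuous_readNode (i : ℕ) : Continuous fun y => T.readNode y i := by
  induction i with
  | zero => exact continuous_const
  | succ i ih =>
    exact (continuous_of_discreteTopology (f := fun p : ℕ × ℕ => Nat.pair p.1 p.2 + 1)).comp
      ((T.continuous_apply_length_readNode i ih).prodMk ih)

theorem continuous_read : Continuous T.read :=
  continuous_pi fun i => T.continuous_apply_length_readNode i (T.continuous_readNode i)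

theorem unpair_point_apply_length (x : ℕ → ℕ) (i : ℕ) :
    (Nat.unpair (T.point x (T.l (branchNode x i)))).1 = x i := by
  rw [point_apply_length]
  exact T.unpair_apply _ _

theorem readNode_point (x : ℕ → ℕ) (i : ℕ) : T.readNode (T.point x) i = branchNode x i := by
  induction i with
  | zero => rfl
  | succ i ih => rw [readNode, ih, unpair_point_apply_length, branchNode]

theorem leftInverse_read : Function.LeftInverse T.read T.point := fun x => by
  ext i
  rw [read, readNode_point, unpair_point_apply_length]

theorem isClosedEmbedding_point : IsClosedEmbedding T.point :=
  T.leftInverse_read.isClosedEmbedding T.continuous_read T.continuous_point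

theorem point_mem_iInter (x : ℕ → ℕ) : T.point x ∈ ⋂ i, O i := by
  refine mem_iInter.2 fun i => T.cylinder_subset _ i ?_ (T.point_mem_cylinder x (i + 1))
  exact Nat.lt_succ_iff.1 ((strictMono_branchNode x).le_apply (x := i + 1))

/-- Points on distinct branches do not dominate each other, even after applying `g`. -/
theorem not_eventually_point_le {x y : ℕ → ℕ} (hxy : x ≠ y) :
    ¬ ∀ᶠ n in atTop, T.point y n ≤ g (T.point x) n := by
  intro h
  obtain ⟨n₀, hn₀⟩ := eventually_atTop.1 h
  obtain ⟨t, ht⟩ := Function.ne_iff.1 hxy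
  obtain ⟨i, hi, j, hij, hji⟩ := exists_interleaving (strictMono_branchNode y)
    (strictMono_branchNode x) (N := t + 1)
    (fun i hi j h => ht (eq_of_branchNode_eq h t hi).symm) n₀
  have hle := hn₀ _ (hi.trans (T.strictMono_length_branchNode y).le_apply)
  have hlt := T.lt_apply (y i) (branchNode y i)
  rw [T.point_apply_length] at hle
  obtain ⟨k, hk⟩ : ∃ k, branchNode x j = k + 1 := Nat.exists_eq_add_one_of_ne_zero (by omega)
  have hg := T.le_bound k (T.point x) (hk ▸ T.point_mem_cylinder x j) (T.point_mem_iInter x)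
    (T.l (branchNode y i)) ((T.length_le _).trans (T.bound_mono (by omega)))
  have hM : T.M (k + 1) ≤ T.M (Nat.pair (y i) (branchNode y i)) :=
    T.bound_mono (hk ▸ Nat.lt_succ_iff.1 hji)
  exact (hle.trans (hg.trans hM)).not_gt hlt

end FusionTree

end Fusion

theorem stmt_14 (E : (ℕ → ℕ) → (ℕ → ℕ) → Prop) (hEquiv : Equivalence E)
    (hE : MeasureTheory.AnalyticSet {p : (ℕ → ℕ) × (ℕ → ℕ) | E p.1 p.2})
    (hclasses : ∀ a : ℕ → ℕ, ∃ K : ℕ → Set (ℕ → ℕ),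
      (∀ n, IsCompact (K n)) ∧ {x : ℕ → ℕ | E a x} ⊆ ⋃ n, K n) :
    ∃ P : Set (ℕ → ℕ), IsClosed P ∧ Nonempty (P ≃ₜ (ℕ → ℕ)) ∧
      ∀ x ∈ P, ∀ y ∈ P, x ≠ y → ¬ E x y := by
  rw [AnalyticSet] at hE
  obtain ⟨f, hf, hrange⟩ := hE.resolve_left (Nonempty.ne_empty ⟨(0, 0), hEquiv.refl 0⟩)
  have hEf (x y : ℕ → ℕ) : E x y ↔ ∃ z, f z = (x, y) := by
    rw [← mem_range, hrange]
    rfl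
  obtain ⟨g, hg, hbound⟩ := exists_measurable_generic_bound (f₁ := fun z => (f z).1)
    (f₂ := fun z => (f z).2) (continuous_fst.comp hf) (continuous_snd.comp hf) fun x => by
      obtain ⟨K, hK, hcov⟩ := hclasses x
      refine ⟨K, hK, Subset.trans ?_ hcov⟩
      rintro _ ⟨z, rfl, rfl⟩
      exact (hEf _ _).2 ⟨z, rfl⟩
  obtain ⟨O, hOo, hOd, hOR, hloc⟩ := exists_denseOpen_locally_bounded hg hbound
  obtain ⟨T⟩ := nonempty_fusionTree hOo hOd hloc
  refine ⟨range T.point, T.isClosedEmbedding_point.isClosed_range,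
    ⟨T.isClosedEmbedding_point.isEmbedding.toHomeomorph.symm⟩, ?_⟩
  rintro _ ⟨x, rfl⟩ _ ⟨y, rfl⟩ hne hxy
  obtain ⟨z, hz⟩ := (hEf _ _).1 hxy
  have := hOR (T.point_mem_iInter x) z (by simp [hz])
  simp only [hz] at this
  exact T.not_eventually_point_le (fun h : x = y => hne (h ▸ rfl)) this
end

section
/- (Zapletal's superperfect dichotomy) Let E be a Borel equivalence relation on ℕ^ℕ and A ⊆ ℕ^ℕ an analytic set. Then either A is covered by the union of countably many E-equivalence classes together with a set contained in countably many compact sets, or there is a superperfect set P ⊆ A whose distinct elements are pairwise E-inequivalent. -/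
open Set Filter Topology PiNat
open MeasureTheory hiding cylinder

namespace SuperperfectDichotomy

/-- `B` is eventually dominated by a single function. -/
def SigmaBdd (B : Set (ℕ → ℕ)) : Prop :=
  ∃ ψ : ℕ → ℕ, ∀ x ∈ B, ∀ᶠ i in atTop, x i ≤ ψ i

theorem SigmaBdd.mono {A B : Set (ℕ → ℕ)} (h : A ⊆ B) (hB : SigmaBdd B) : SigmaBdd A := by
  obtain ⟨ψ, hψ⟩ := hB
  exact ⟨ψ, fun x hx => hψ x (h hx)⟩

theorem exists_eventually_dominating (ψ : ℕ → ℕ → ℕ) :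
    ∃ φ : ℕ → ℕ, ∀ n, ∀ᶠ i in atTop, ψ n i ≤ φ i := by
  refine ⟨fun i => (Finset.range (i + 1)).sup fun n => ψ n i, fun n => ?_⟩
  filter_upwards [eventually_ge_atTop n] with i hi
  exact Finset.le_sup (f := fun n => ψ n i) (Finset.mem_range.2 (by omega))

theorem SigmaBdd.iUnion {ι : Type*} [Countable ι] {B : ι → Set (ℕ → ℕ)}
    (h : ∀ n, SigmaBdd (B n)) : SigmaBdd (⋃ n, B n) := by
  rcases isEmpty_or_nonempty ι with hι | hι
  · exact ⟨0, by simp⟩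
  obtain ⟨e, he⟩ := exists_surjective_nat ι
  choose ψ hψ using h
  obtain ⟨φ, hφ⟩ := exists_eventually_dominating fun n => ψ (e n)
  refine ⟨φ, fun x hx => ?_⟩
  obtain ⟨i, hi⟩ := mem_iUnion.1 hx
  obtain ⟨n, rfl⟩ := he i
  filter_upwards [hψ _ x hi, hφ n] with j h1 h2 using h1.trans h2

theorem SigmaBdd.union {A B : Set (ℕ → ℕ)} (hA : SigmaBdd A) (hB : SigmaBdd B) :
    SigmaBdd (A ∪ B) := by
  rw [union_eq_iUnion]
  exact SigmaBdd.iUnion fun i => by cases i <;> assumption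

theorem sigmaBdd_of_bounded {B : Set (ℕ → ℕ)} (h : ∀ i, ∃ M, ∀ x ∈ B, x i ≤ M) :
    SigmaBdd B := by
  choose ψ hψ using h
  exact ⟨ψ, fun x hx => Eventually.of_forall fun i => hψ i x hx⟩

theorem exists_le_add_of_eventually_le {x ψ : ℕ → ℕ} (h : ∀ᶠ i in atTop, x i ≤ ψ i) :
    ∃ c, ∀ i, x i ≤ ψ i + c := by
  obtain ⟨N, hN⟩ := eventually_atTop.1 h
  refine ⟨(Finset.range N).sup x, fun i => ?_⟩
  rcases le_or_gt N i with hi | hi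
  · exact (hN i hi).trans (Nat.le_add_right _ _)
  · exact (Finset.le_sup (f := x) (Finset.mem_range.2 hi)).trans (Nat.le_add_left _ _)

theorem SigmaBdd.exists_isCompact {B : Set (ℕ → ℕ)} (h : SigmaBdd B) :
    ∃ K : ℕ → Set (ℕ → ℕ), (∀ n, IsCompact (K n)) ∧ B ⊆ ⋃ n, K n := by
  obtain ⟨ψ, hψ⟩ := h
  refine ⟨fun c => Set.pi univ fun i => Iic (ψ i + c),
    fun c => isCompact_univ_pi fun i => (Set.finite_Iic _).isCompact, fun x hx => ?_⟩
  obtain ⟨c, hc⟩ := exists_le_add_of_eventually_le (hψ x hx)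
  exact mem_iUnion.2 ⟨c, fun i _ => hc i⟩

/-- The limit of a sequence of sequences that stabilize along initial segments. -/
def diag {ι : Type*} (x : ℕ → ℕ → ι) : ℕ → ι := fun i => x (i + 1) i

theorem diag_eq {ι : Type*} {x : ℕ → ℕ → ι} {m : ℕ → ℕ} (hm : ∀ n, n ≤ m n) (hmono : Monotone m)
    (h : ∀ n, ∀ i < m n, x (n + 1) i = x n i) (n i : ℕ) (hi : i < m n) : diag x i = x n i := by
  have key : ∀ k n i, i < m n → x (n + k) i = x n i := by
    intro k
    induction k with
    | zero => intro n i _; rfl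
    | succ k ih =>
      intro n i hi
      rw [← add_assoc, h (n + k) i (hi.trans_le (hmono (Nat.le_add_right _ _))), ih n i hi]
  unfold diag
  rcases le_total n (i + 1) with h1 | h1
  · obtain ⟨k, hk⟩ := Nat.exists_eq_add_of_le h1
    rw [hk, key k n i hi]
  · obtain ⟨k, hk⟩ := Nat.exists_eq_add_of_le h1
    rw [hk, key k (i + 1) i (lt_of_lt_of_le (Nat.lt_succ_self i) (hm _))]

section Cylinders

variable {κ : Type*} [TopologicalSpace κ] [DiscreteTopology κ]

theorem exists_cylinder_subset {x : ℕ → κ} {U : Set (ℕ → κ)} (hU : U ∈ 𝓝 x) :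
    ∃ n, cylinder x n ⊆ U := by
  obtain ⟨_, ⟨y, n, rfl⟩, hx, hs⟩ :=
    (isTopologicalBasis_cylinders (fun _ : ℕ => κ)).mem_nhds_iff.1 hU
  exact ⟨n, by rwa [mem_cylinder_iff_eq.1 hx]⟩

theorem exists_cylinder_eq {X : Type*} [TopologicalSpace X] [DiscreteTopology X]
    {f : (ℕ → κ) → X} (hf : Continuous f) (x : ℕ → κ) :
    ∃ n, ∀ y ∈ cylinder x n, f y = f x :=
  exists_cylinder_subset (U := {y | f y = f x})
    (hf.continuousAt.preimage_mem_nhds ((isOpen_discrete {f x}).mem_nhds rfl))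

theorem continuous_comp_res {X : Type*} [TopologicalSpace X] (f : List κ → X) (n : ℕ) :
    Continuous fun α : ℕ → κ => f (res α n) := by
  refine IsLocallyConstant.continuous
    ((IsLocallyConstant.iff_exists_open _).2 fun α => ⟨cylinder α n, isOpen_cylinder _ α n,
      self_mem_cylinder α n, fun β hβ => ?_⟩)
  rw [cylinder_eq_res] at hβ
  exact congrArg f hβ

theorem continuous_diag_res {ι : Type*} [TopologicalSpace ι] (b : List κ → ℕ → ι) :
    Continuous fun α : ℕ → κ => diag fun n => b (res α n) :=
  continuous_pi fun i => continuous_comp_res (fun s => b s i) (i + 1)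

end Cylinders

/-- A parametrization of a superperfect set by its splitting levels. -/
structure Superp (p : (ℕ → ℕ) → ℕ → ℕ) : Prop where
  cont : Continuous p
  split : ∀ α n, ∃ l, ∀ β ∈ cylinder α n, ∀ γ ∈ cylinder α n, p β l = p γ l → β n = γ n

theorem Superp.injective {p : (ℕ → ℕ) → ℕ → ℕ} (hp : Superp p) : Function.Injective p := by
  intro β γ h
  have : ∀ n, γ ∈ cylinder β n := by
    intro n
    induction n with
    | zero => simp
    | succ n ih =>
      obtain ⟨l, hl⟩ := hp.split β n
      have h1 := hl β (self_mem_cylinder _ _) γ ih (by rw [h])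
      rw [mem_cylinder_iff] at ih ⊢
      intro i hi
      rcases Nat.lt_succ_iff_lt_or_eq.1 hi with hi | rfl
      · exact ih i hi
      · exact h1.symm
  funext i
  exact ((mem_cylinder_iff.1 (this (i + 1))) i (Nat.lt_succ_self i)).symm

theorem Superp.isClosedMap {p : (ℕ → ℕ) → ℕ → ℕ} (hp : Superp p) : IsClosedMap p := by
  intro C hC
  refine isClosed_of_closure_subset fun x hx => ?_
  have step : ∀ n (α : ℕ → ℕ), x ∈ closure (p '' (C ∩ cylinder α n)) →
      ∃ β ∈ cylinder α n, x ∈ closure (p '' (C ∩ cylinder β (n + 1))) := by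
    intro n α hα
    obtain ⟨l, hl⟩ := hp.split α n
    have hopen : {y : ℕ → ℕ | y l = x l} ∈ 𝓝 x :=
      (continuous_apply l).continuousAt.preimage_mem_nhds ((isOpen_discrete {x l}).mem_nhds rfl)
    obtain ⟨_, hy, β, hβ, rfl⟩ := mem_closure_iff_nhds.1 hα _ hopen
    refine ⟨β, hβ.2, mem_closure_iff_nhds.2 fun U hU => ?_⟩
    obtain ⟨_, hz, γ, hγ, rfl⟩ := mem_closure_iff_nhds.1 hα _ (inter_mem hU hopen)
    refine ⟨p γ, hz.1, γ, ⟨hγ.1, ?_⟩, rfl⟩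
    have h1 : γ n = β n := hl γ hγ.2 β hβ.2 (hz.2.trans hy.symm)
    rw [mem_cylinder_iff]
    intro i hi
    rcases Nat.lt_succ_iff_lt_or_eq.1 hi with hi | rfl
    · rw [mem_cylinder_iff.1 hγ.2 i hi, mem_cylinder_iff.1 hβ.2 i hi]
    · exact h1
  choose! F hF1 hF2 using step
  let a : ℕ → ℕ → ℕ := fun n => Nat.rec 0 (fun n α => F n α) n
  have ha : ∀ n, x ∈ closure (p '' (C ∩ cylinder (a n) n)) := by
    intro n
    induction n with
    | zero => simpa using hx
    | succ n ih => exact hF2 n _ ih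
  have hd : ∀ n, ∀ i < n, diag a i = a n i := fun n i hi =>
    diag_eq (m := id) (fun n => le_rfl) monotone_id
      (fun n i hi => mem_cylinder_iff.1 (hF1 n _ (ha n)) i hi) n i hi
  have hx' : ∀ n, x ∈ closure (p '' (C ∩ cylinder (diag a) n)) := by
    intro n
    have h1 : cylinder (diag a) n = cylinder (a n) n :=
      mem_cylinder_iff_eq.1 (mem_cylinder_iff.2 (hd n))
    rw [h1]; exact ha n
  refine ⟨diag a, ?_, ?_⟩
  · refine hC.closure_subset (mem_closure_iff_nhds.2 fun U hU => ?_)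
    obtain ⟨n, hn⟩ := exists_cylinder_subset hU
    obtain ⟨_, _, β, hβ, rfl⟩ := mem_closure_iff_nhds.1 (hx' n) _ univ_mem
    exact ⟨β, hn hβ.2, hβ.1⟩
  · funext i
    obtain ⟨n, hn⟩ := exists_cylinder_eq ((continuous_apply i).comp hp.cont) (diag a)
    have hopen : {y : ℕ → ℕ | y i = x i} ∈ 𝓝 x :=
      (continuous_apply i).continuousAt.preimage_mem_nhds ((isOpen_discrete {x i}).mem_nhds rfl)
    obtain ⟨_, hy, β, hβ, rfl⟩ := mem_closure_iff_nhds.1 (hx' n) _ hopen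
    exact (hn β hβ.2).symm.trans hy

theorem Superp.isClosed_range {p : (ℕ → ℕ) → ℕ → ℕ} (hp : Superp p) : IsClosed (range p) :=
  hp.isClosedMap.isClosed_range

theorem Superp.nonempty_homeomorph {p : (ℕ → ℕ) → ℕ → ℕ} (hp : Superp p) :
    Nonempty (range p ≃ₜ (ℕ → ℕ)) :=
  ⟨((Topology.IsClosedEmbedding.of_continuous_injective_isClosedMap hp.cont hp.injective
    hp.isClosedMap).isEmbedding.toHomeomorph).symm⟩

theorem exists_recursive_choice {S D : Type*} [Nonempty D] (code : S → ℕ)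
    (R : S → (S → D) → D → Prop)
    (hloc : ∀ s f f' d, (∀ t, code t < code s → f t = f' t) → R s f d → R s f' d)
    (hex : ∀ s f, (∀ t, code t < code s → R t f (f t)) → ∃ d, R s f d) :
    ∃ f : S → D, ∀ s, R s f (f s) := by
  classical
  have hex' : ∀ s f, ∃ d, (∀ t, code t < code s → R t f (f t)) → R s f d := by
    intro s f
    by_cases h : ∀ t, code t < code s → R t f (f t)
    · obtain ⟨d, hd⟩ := hex s f h
      exact ⟨d, fun _ => hd⟩
    · exact ⟨Classical.arbitrary D, fun h' => absurd h' h⟩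
  choose F hF using hex'
  have wf : WellFounded fun t s : S => code t < code s := (measure code).wf
  let f : S → D := wf.fix fun s ih =>
    F s fun t => if h : code t < code s then ih t h else Classical.arbitrary D
  have hf : ∀ s, f s = F s fun t => if code t < code s then f t else Classical.arbitrary D := by
    intro s
    exact (wf.fix_eq _ s).trans (by simp only [dite_eq_ite]; rfl)
  refine ⟨f, fun s => ?_⟩
  induction s using wf.induction with
  | _ s ih =>
    have hloc1 := hloc s (fun t => if code t < code s then f t else Classical.arbitrary D) f
      (f s) (fun t ht => by simp [ht])
    refine hloc1 ?_
    rw [hf s]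
    refine hF s _ fun t ht => ?_
    simp only [ht, if_true]
    exact hloc t f _ (f t) (fun u hu => by simp [hu.trans ht]) (ih t ht)

/-- A tree of finite approximations along which `g` splits superperfectly. -/
structure IsScheme (g : (ℕ → ℕ) → ℕ → ℕ) (b : List ℕ → ℕ → ℕ) (m l : List ℕ → ℕ) : Prop where
  mem : ∀ s k, b (k :: s) ∈ cylinder (b s) (m s)
  lt : ∀ s k, m s < m (k :: s)
  split : ∀ s k k', ∀ c ∈ cylinder (b (k :: s)) (m (k :: s)),
    ∀ c' ∈ cylinder (b (k' :: s)) (m (k' :: s)), g c (l s) = g c' (l s) → k = k'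

/-- The point determined by the branch `α` of a tree of approximations. -/
def branchPt (b : List ℕ → ℕ → ℕ) (α : ℕ → ℕ) : ℕ → ℕ := diag fun n => b (res α n)

theorem continuous_branchPt (b : List ℕ → ℕ → ℕ) : Continuous (branchPt b) :=
  continuous_diag_res b

theorem branchPt_mem {b : List ℕ → ℕ → ℕ} {m : List ℕ → ℕ}
    (mem : ∀ s k, b (k :: s) ∈ cylinder (b s) (m s)) (lt : ∀ s k, m s < m (k :: s))
    (α : ℕ → ℕ) (n : ℕ) : branchPt b α ∈ cylinder (b (res α n)) (m (res α n)) := by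
  have hm : StrictMono fun n => m (res α n) := strictMono_nat_of_lt_succ fun n => lt _ _
  exact mem_cylinder_iff.2 fun i hi => diag_eq (m := fun n => m (res α n)) (fun n => hm.id_le n)
    hm.monotone (fun n i hi => mem_cylinder_iff.1 (mem (res α n) (α n)) i hi) n i hi

theorem res_eq_of_mem_cylinder {κ : Type*} {α β : ℕ → κ} {n : ℕ} (h : β ∈ cylinder α n) :
    res β n = res α n := by
  rw [cylinder_eq_res] at h; exact h

theorem IsScheme.superp {g : (ℕ → ℕ) → ℕ → ℕ} (hg : Continuous g) {b : List ℕ → ℕ → ℕ}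
    {m l : List ℕ → ℕ} (h : IsScheme g b m l) : Superp fun α => g (branchPt b α) where
  cont := hg.comp (continuous_branchPt b)
  split α n := by
    refine ⟨l (res α n), fun β hβ γ hγ hbc => ?_⟩
    have h1 := branchPt_mem h.mem h.lt β (n + 1)
    have h2 := branchPt_mem h.mem h.lt γ (n + 1)
    rw [res_succ, res_eq_of_mem_cylinder hβ] at h1
    rw [res_succ, res_eq_of_mem_cylinder hγ] at h2
    exact h.split _ _ _ _ h1 _ h2 hbc

theorem sigmaBdd_image_of_locally {g : (ℕ → ℕ) → ℕ → ℕ} {C : Set (ℕ → ℕ)} :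
    SigmaBdd (g '' {b | b ∈ C ∧ ∃ n, SigmaBdd (g '' (C ∩ cylinder b n))}) := by
  have h := SigmaBdd.iUnion (ι := {t : List ℕ // SigmaBdd (g '' {b | b ∈ C ∧ res b t.length = t})})
    (B := fun t => g '' {b | b ∈ C ∧ res b t.1.length = t.1}) fun t => t.2
  refine h.mono ?_
  rintro _ ⟨b, ⟨hb, n, hn⟩, rfl⟩
  refine mem_iUnion.2 ⟨⟨res b n, hn.mono (image_mono ?_)⟩, b, ⟨hb, by simp⟩, rfl⟩
  rintro c ⟨hc, hc'⟩
  refine ⟨hc, ?_⟩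
  rw [cylinder_eq_res]
  simpa using hc'

theorem exists_unbounded_of_not_sigmaBdd {g : (ℕ → ℕ) → ℕ → ℕ} {C : Set (ℕ → ℕ)}
    (h : ¬ SigmaBdd (g '' C)) : ∃ l, ∀ M, ∃ c ∈ C, M < g c l := by
  by_contra! hcon
  refine h (sigmaBdd_of_bounded fun i => ?_)
  obtain ⟨M, hM⟩ := hcon i
  exact ⟨M, by rintro _ ⟨c, hc, rfl⟩; exact hM c hc⟩

theorem exists_kernel {g : (ℕ → ℕ) → ℕ → ℕ} {C : Set (ℕ → ℕ)} (h : ¬ SigmaBdd (g '' C)) :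
    ∃ C' ⊆ C, C'.Nonempty ∧
      ∀ b ∈ C', ∀ n, ∃ l, ∀ M, ∃ c ∈ C' ∩ cylinder b n, M < g c l := by
  have key : ∀ D ⊆ C, ¬ SigmaBdd (g '' D) →
      ¬ SigmaBdd (g '' ({b | b ∈ C ∧ ∀ n, ¬ SigmaBdd (g '' (C ∩ cylinder b n))} ∩ D)) := by
    intro D hD hnD hcon
    refine hnD ((hcon.union (sigmaBdd_image_of_locally (g := g) (C := C))).mono ?_)
    rintro _ ⟨b, hb, rfl⟩
    by_cases hn : ∃ n, SigmaBdd (g '' (C ∩ cylinder b n))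
    · exact Or.inr ⟨b, ⟨hD hb, hn⟩, rfl⟩
    · exact Or.inl ⟨b, ⟨⟨hD hb, not_exists.1 hn⟩, hb⟩, rfl⟩
  refine ⟨{b | b ∈ C ∧ ∀ n, ¬ SigmaBdd (g '' (C ∩ cylinder b n))}, fun b hb => hb.1, ?_, ?_⟩
  · obtain ⟨l, hl⟩ := exists_unbounded_of_not_sigmaBdd (key C Subset.rfl h)
    obtain ⟨c, hc, -⟩ := hl 0
    exact ⟨c, hc.1⟩
  · intro b hb n
    obtain ⟨l, hl⟩ := exists_unbounded_of_not_sigmaBdd (key _ inter_subset_left (hb.2 n))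
    refine ⟨l, fun M => ?_⟩
    obtain ⟨c, hc, hM⟩ := hl M
    exact ⟨c, ⟨hc.1, hc.2.2⟩, hM⟩

theorem encode_lt_encode_cons (k : ℕ) (s : List ℕ) :
    Encodable.encode s < Encodable.encode (k :: s) := by
  rw [Encodable.encode_list_cons]
  exact Nat.lt_succ_of_le (Nat.right_le_pair _ _)

/-- The conditions imposed on a node of the tree built in `exists_scheme`. -/
structure NodeSpec (g φ : (ℕ → ℕ) → ℕ → ℕ) (C : Set (ℕ → ℕ))
    (f : List ℕ → (ℕ → ℕ) × ℕ × ℕ) (d : (ℕ → ℕ) × ℕ × ℕ) (s : List ℕ) : Prop where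
  mem : d.1 ∈ C
  unbdd : ∀ M, ∃ c ∈ C ∩ cylinder d.1 d.2.1, M < g c d.2.2
  freeze : ∀ t, Encodable.encode t < Encodable.encode s → ∀ c ∈ cylinder d.1 d.2.1,
    φ c (f t).2.2 = φ d.1 (f t).2.2
  memCyl : ∀ k t, s = k :: t → d.1 ∈ cylinder (f t).1 (f t).2.1
  lt : ∀ k t, s = k :: t → (f t).2.1 < d.2.1
  const : ∀ k t, s = k :: t → ∀ c ∈ cylinder d.1 d.2.1, g c (f t).2.2 = g d.1 (f t).2.2
  win : ∀ k t, s = k :: t → ∀ u, Encodable.encode u < Encodable.encode s →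
    φ (f u).1 (f t).2.2 < g d.1 (f t).2.2 ∧ g (f u).1 (f t).2.2 < g d.1 (f t).2.2

theorem finite_encode_lt (n : ℕ) : {t : List ℕ | Encodable.encode t < n}.Finite :=
  (Set.finite_Iio n).preimage Encodable.encode_injective.injOn

theorem exists_cylinder_eq_of_finite {φ : (ℕ → ℕ) → ℕ → ℕ} (hφ : Continuous φ) {I : Set ℕ}
    (hI : I.Finite) (b : ℕ → ℕ) : ∃ n, ∀ c ∈ cylinder b n, ∀ i ∈ I, φ c i = φ b i := by
  refine exists_cylinder_subset (U := {c | ∀ i ∈ I, φ c i = φ b i}) ?_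
  refine (eventually_all_finite hI).2 fun i _ => ?_
  exact ((continuous_apply i).comp hφ).continuousAt.preimage_mem_nhds
    ((isOpen_discrete {φ b i}).mem_nhds rfl)

theorem exists_gt_of_finite {T : Set (List ℕ)} (hT : T.Finite) (F : List ℕ → ℕ) :
    ∃ M, ∀ t ∈ T, F t ≤ M := by
  obtain ⟨M, hM⟩ := (hT.image F).bddAbove
  exact ⟨M, fun t ht => hM ⟨t, ht, rfl⟩⟩

theorem exists_nodes {g φ : (ℕ → ℕ) → ℕ → ℕ} (hg : Continuous g) (hφ : Continuous φ)
    {C : Set (ℕ → ℕ)} (hne : C.Nonempty)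
    (hC : ∀ b ∈ C, ∀ n, ∃ l, ∀ M, ∃ c ∈ C ∩ cylinder b n, M < g c l) :
    ∃ f : List ℕ → (ℕ → ℕ) × ℕ × ℕ, ∀ s, NodeSpec g φ C f (f s) s := by
  refine exists_recursive_choice (Encodable.encode (α := List ℕ))
    (fun s f d => NodeSpec g φ C f d s) ?_ ?_
  · intro s f f' d hff h
    have hs : ∀ k t, s = k :: t → f t = f' t := fun k t hst =>
      hff t (hst ▸ encode_lt_encode_cons k t)
    refine ⟨h.mem, h.unbdd, fun t ht => ?_, fun k t hst => ?_, fun k t hst => ?_,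
      fun k t hst => ?_, fun k t hst u hu => ?_⟩
    · rw [← hff t ht]; exact h.freeze t ht
    · rw [← hs k t hst]; exact h.memCyl k t hst
    · rw [← hs k t hst]; exact h.lt k t hst
    · rw [← hs k t hst]; exact h.const k t hst
    · rw [← hs k t hst, ← hff u hu]; exact h.win k t hst u hu
  · intro s f ih
    have hfin := finite_encode_lt (Encodable.encode s)
    cases s with
    | nil =>
      obtain ⟨b, hb⟩ := hne
      obtain ⟨n, hn⟩ := exists_cylinder_eq_of_finite hφ (hfin.image fun t => (f t).2.2) b
      obtain ⟨l, hl⟩ := hC b hb n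
      refine ⟨(b, n, l), hb, hl, fun t ht c hc => hn c hc _ ⟨t, ht, rfl⟩, ?_, ?_, ?_, ?_⟩ <;>
      · intro k t h; cases h
    | cons k t =>
      have iht := ih t (encode_lt_encode_cons k t)
      obtain ⟨M1, hM1⟩ := exists_gt_of_finite hfin fun u => φ (f u).1 (f t).2.2
      obtain ⟨M2, hM2⟩ := exists_gt_of_finite hfin fun u => g (f u).1 (f t).2.2
      obtain ⟨b, ⟨hb, hb'⟩, hbM⟩ := iht.unbdd (max M1 M2)
      obtain ⟨n1, hn1⟩ := exists_cylinder_eq_of_finite hφ (hfin.image fun t => (f t).2.2) b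
      obtain ⟨n2, hn2⟩ := exists_cylinder_eq_of_finite hg (Set.finite_singleton (f t).2.2) b
      obtain ⟨l, hl⟩ := hC b hb (max (max n1 n2) ((f t).2.1 + 1))
      refine ⟨(b, max (max n1 n2) ((f t).2.1 + 1), l), hb, hl, ?_, ?_, ?_, ?_, ?_⟩
      · exact fun t ht c hc => hn1 c (cylinder_anti _ (by simp) hc) _ ⟨t, ht, rfl⟩
      · rintro k' t' h
        obtain ⟨rfl, rfl⟩ := List.cons.inj h
        exact hb'
      · rintro k' t' h
        obtain ⟨rfl, rfl⟩ := List.cons.inj h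
        exact lt_of_lt_of_le (Nat.lt_succ_self _) (le_max_right _ _)
      · rintro k' t' h c hc
        obtain ⟨rfl, rfl⟩ := List.cons.inj h
        exact hn2 c (cylinder_anti _ (by simp) hc) _ rfl
      · rintro k' t' h u hu
        obtain ⟨rfl, rfl⟩ := List.cons.inj h
        exact ⟨((hM1 u hu).trans (le_max_left _ _)).trans_lt hbM,
          ((hM2 u hu).trans (le_max_right _ _)).trans_lt hbM⟩

theorem exists_interleaving {a : ℕ → ℕ} (ha : StrictMono a) {e N : ℕ} (he : a N ≤ e) :
    ∃ m, N ≤ m ∧ a m ≤ e ∧ e < a (m + 1) := by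
  have hex : ∃ k, e < a k := ⟨e + 1, (Nat.lt_succ_self e).trans_le (ha.id_le _)⟩
  classical
  have hN : N < Nat.find hex := by
    by_contra! hcon
    exact absurd (Nat.find_spec hex) (not_lt.2 ((ha.monotone hcon).trans he))
  refine ⟨Nat.find hex - 1, by omega, not_lt.1 (Nat.find_min hex (by omega)), ?_⟩
  rw [Nat.sub_add_cancel (by omega)]
  exact Nat.find_spec hex

theorem exists_scheme {g φ : (ℕ → ℕ) → ℕ → ℕ} (hg : Continuous g) (hφ : Continuous φ)
    {C : Set (ℕ → ℕ)} (hC : ¬ SigmaBdd (g '' C)) :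
    ∃ b m l, IsScheme g b m l ∧ (∀ s, b s ∈ C) ∧
      ∀ α β, α ≠ β → ∃ᶠ i in atTop, φ (branchPt b β) i < g (branchPt b α) i := by
  obtain ⟨C', hC'C, hne, hC'⟩ := exists_kernel hC
  obtain ⟨f, hf⟩ := exists_nodes hg hφ hne hC'
  have mem : ∀ s k, (f (k :: s)).1 ∈ cylinder (f s).1 (f s).2.1 := fun s k =>
    (hf (k :: s)).memCyl k s rfl
  have lt : ∀ s k, (f s).2.1 < (f (k :: s)).2.1 := fun s k => (hf (k :: s)).lt k s rfl
  refine ⟨fun s => (f s).1, fun s => (f s).2.1, fun s => (f s).2.2, ⟨mem, lt, ?_⟩,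
    fun s => hC'C (hf s).mem, ?_⟩
  · intro s k k' c hc c' hc' hcc
    by_contra hkk
    rw [(hf (k :: s)).const k s rfl c hc, (hf (k' :: s)).const k' s rfl c' hc'] at hcc
    rcases lt_trichotomy (Encodable.encode (k :: s)) (Encodable.encode (k' :: s)) with h | h | h
    · exact absurd hcc ((hf (k' :: s)).win k' s rfl _ h).2.ne
    · exact hkk (List.cons.inj (Encodable.encode_injective h)).1
    · exact absurd hcc ((hf (k :: s)).win k s rfl _ h).2.ne'
  · intro α β hαβ
    set b := fun s => (f s).1
    have hcyl : ∀ γ n, branchPt b γ ∈ cylinder (f (res γ n)).1 (f (res γ n)).2.1 :=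
      branchPt_mem mem lt
    have code_mono : ∀ γ : ℕ → ℕ, StrictMono fun n => Encodable.encode (res γ n) := fun γ =>
      strictMono_nat_of_lt_succ fun n => encode_lt_encode_cons _ _
    have hmono : ∀ γ : ℕ → ℕ, StrictMono fun n => (f (res γ n)).2.1 := fun γ =>
      strictMono_nat_of_lt_succ fun n => lt _ _
    have linj : Function.Injective fun n => (f (res α n)).2.2 := by
      have : ∀ n n', n < n' → (f (res α n)).2.2 ≠ (f (res α n')).2.2 := by
        intro n n' hn heq
        obtain ⟨c, ⟨-, hc⟩, hcM⟩ := (hf (res α n')).unbdd (g (b (res α (n + 1))) (f (res α n)).2.2)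
        have h1 : (f (res α n')).1 ∈ cylinder (f (res α (n+1))).1 (f (res α (n+1))).2.1 := by
          have h2 := hcyl α (n + 1)
          have h3 := hcyl α n'
          rw [mem_cylinder_iff] at h2 h3 ⊢
          intro i hi
          rw [← h2 i hi, h3 i (hi.trans_le ((hmono α).monotone hn))]
        have h4 : c ∈ cylinder (f (res α (n+1))).1 (f (res α (n+1))).2.1 := by
          rw [← mem_cylinder_iff_eq.1 h1]
          exact cylinder_anti _ ((hmono α).monotone hn) hc
        have h5 := (hf (res α (n + 1))).const (α n) (res α n) rfl c h4
        rw [← heq, h5] at hcM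
        exact lt_irrefl _ hcM
      intro n n' h
      rcases lt_trichotomy n n' with h1 | h1 | h1
      · exact absurd h (this _ _ h1)
      · exact h1
      · exact absurd h.symm (this _ _ h1)
    refine linj.nat_tendsto_atTop.frequently (frequently_atTop.2 fun N => ?_)
    obtain ⟨d, hd⟩ := Function.ne_iff.1 hαβ
    set n := max (d + 1) (Encodable.encode (res α N))
    have hn1 : Encodable.encode (res α N) ≤ Encodable.encode (res β n) :=
      (le_max_right _ _).trans ((code_mono β).id_le n)
    obtain ⟨k, hNk, hk1, hk2⟩ := exists_interleaving (code_mono α) hn1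
    refine ⟨k, hNk, ?_⟩
    have hk1' : Encodable.encode (res α k) < Encodable.encode (res β n) := by
      refine lt_of_le_of_ne hk1 fun heq => hd ?_
      have h1 := Encodable.encode_injective heq
      have h2 : k = n := by simpa using congrArg List.length h1
      rw [h2] at h1
      exact (res_eq_res.1 h1) (lt_of_lt_of_le (Nat.lt_succ_self d) (le_max_left _ _))
    show φ (branchPt b β) (f (res α k)).2.2 < g (branchPt b α) (f (res α k)).2.2
    rw [(hf (res β n)).freeze _ hk1' _ (hcyl β n),
      (hf (res α (k + 1))).const (α k) (res α k) rfl _ (hcyl α (k + 1))]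
    exact ((hf (res α (k + 1))).win (α k) (res α k) rfl _ hk2).1

theorem exists_injective_selection {v : ℕ → ℕ → ℕ} (hv : ∀ k, Function.Injective (v k)) :
    ∃ κ : ℕ → ℕ, Function.Injective fun k => v k (κ k) := by
  obtain ⟨κ, hκ⟩ := exists_recursive_choice (D := ℕ) (id : ℕ → ℕ)
    (fun k f d => ∀ t < k, v t (f t) < v k d)
    (fun k f f' d hff h t ht => by rw [← hff t ht]; exact h t ht)
    (fun k f _ => by
      obtain ⟨B, hB⟩ := ((Set.finite_Iio k).image fun t => v t (f t)).bddAbove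
      obtain ⟨d, hd⟩ := ((hv k).nat_tendsto_atTop.eventually (eventually_gt_atTop B)).exists
      exact ⟨d, fun t ht => (hB ⟨t, ht, rfl⟩).trans_lt hd⟩)
  have hmono : StrictMono fun k => v k (κ k) := fun i j hij => hκ j i hij
  exact ⟨κ, hmono.injective⟩

theorem update_mem_cylinder' {κ : Type*} (x : ℕ → κ) {n k : ℕ} (h : n ≤ k) (a : κ) :
    Function.update x k a ∈ cylinder x n :=
  mem_cylinder_iff.2 fun i hi => Function.update_of_ne (by omega) _ _

/-- The children of a node `(y, a, r, r')` in the construction of `exists_transversal`. -/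
structure ChildSpec (Ψ : (ℕ → Bool) → (ℕ → ℕ) → ℕ → ℕ) (l : (ℕ → Bool) → List ℕ → ℕ)
    (d : (ℕ → Bool) × (ℕ → ℕ) × ℕ × ℕ) (c : ℕ → (ℕ → Bool) × (ℕ → ℕ) × ℕ × ℕ) : Prop where
  memY : ∀ k, (c k).1 ∈ cylinder d.1 d.2.2.2
  memA : ∀ k, (c k).2.1 ∈ cylinder d.2.1 d.2.2.1
  ltA : ∀ k, d.2.2.1 < (c k).2.2.1
  ltY : ∀ k, d.2.2.2 < (c k).2.2.2
  disj : ∀ k j, ∀ y ∈ cylinder (c k).1 (c k).2.2.2, y ∈ cylinder (c j).1 (c j).2.2.2 → k = j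
  split : ∀ k j, ∀ y ∈ cylinder (c k).1 (c k).2.2.2, ∀ a ∈ cylinder (c k).2.1 (c k).2.2.1,
    ∀ y' ∈ cylinder (c j).1 (c j).2.2.2, ∀ a' ∈ cylinder (c j).2.1 (c j).2.2.1,
    Ψ y a (l d.1 (res d.2.1 d.2.2.1)) = Ψ y' a' (l d.1 (res d.2.1 d.2.2.1)) → k = j
  const : ∀ k, ∀ y ∈ cylinder (c k).1 (c k).2.2.2,
    l y (res (c k).2.1 (c k).2.2.1) = l (c k).1 (res (c k).2.1 (c k).2.2.1)

theorem exists_cylinder_prod_eq {f : (ℕ → Bool) × (ℕ → ℕ) → ℕ} (hf : Continuous f)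
    (y : ℕ → Bool) (a : ℕ → ℕ) :
    ∃ n, ∀ y' ∈ cylinder y n, ∀ a' ∈ cylinder a n, f (y', a') = f (y, a) := by
  have h : {p | f p = f (y, a)} ∈ 𝓝 (y, a) :=
    hf.continuousAt.preimage_mem_nhds ((isOpen_discrete {f (y, a)}).mem_nhds rfl)
  rw [nhds_prod_eq] at h
  obtain ⟨U, hU, V, hV, hUV⟩ := mem_prod_iff.1 h
  obtain ⟨n1, h1⟩ := exists_cylinder_subset hU
  obtain ⟨n2, h2⟩ := exists_cylinder_subset hV
  exact ⟨max n1 n2, fun y' hy' a' ha' => hUV (mk_mem_prod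
    (h1 (cylinder_anti _ (le_max_left _ _) hy')) (h2 (cylinder_anti _ (le_max_right _ _) ha')))⟩

variable {Ψ : (ℕ → Bool) → (ℕ → ℕ) → ℕ → ℕ} {l : (ℕ → Bool) → List ℕ → ℕ}

theorem exists_children (hΨ : Continuous fun p : (ℕ → Bool) × (ℕ → ℕ) => Ψ p.1 p.2)
    (hl : ∀ s, Continuous fun y => l y s)
    (hsplit : ∀ y β γ n, res β n = res γ n →
      Ψ y β (l y (res β n)) = Ψ y γ (l y (res β n)) → β n = γ n)
    (d : (ℕ → Bool) × (ℕ → ℕ) × ℕ × ℕ)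
    (hd : ∀ y ∈ cylinder d.1 d.2.2.2, l y (res d.2.1 d.2.2.1) = l d.1 (res d.2.1 d.2.2.1)) :
    ∃ c, ChildSpec Ψ l d c := by
  obtain ⟨y, a, r, r'⟩ := d
  dsimp only at hd
  set L := l y (res a r) with hL
  set z : ℕ → ℕ → Bool := fun k => Function.update y (r' + k) (!y (r' + k)) with hz
  have hzmem : ∀ k, z k ∈ cylinder y r' := fun k => update_mem_cylinder' y (by omega) _
  have hres : ∀ k, res (Function.update a r k) r = res a r := fun k =>
    res_eq_of_mem_cylinder (update_mem_cylinder' a le_rfl k)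
  obtain ⟨κ, hκ⟩ := exists_injective_selection
    (v := fun k k' => Ψ (z k) (Function.update a r k') L) fun k i j hij => by
      have := hsplit (z k) (Function.update a r i) (Function.update a r j) r
        ((hres i).trans (hres j).symm) (by rw [hres, hd _ (hzmem k)]; exact hij)
      simpa using this
  have hcont : Continuous fun p : (ℕ → Bool) × (ℕ → ℕ) => Ψ p.1 p.2 L :=
    (continuous_apply L).comp hΨ
  choose R hR using fun k => exists_cylinder_prod_eq hcont (z k) (Function.update a r (κ k))
  choose R' hR' using fun k => exists_cylinder_eq
    (hl (res (Function.update a r (κ k)) (max (R k) (r + 1)))) (z k)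
  have hbig : ∀ k, r' + k < max (max (R k) (R' k)) (r' + k + 1) := fun k =>
    lt_of_lt_of_le (Nat.lt_succ_self _) (le_max_right _ _)
  have hcyl : ∀ k, ∀ w ∈ cylinder (z k) (max (max (R k) (R' k)) (r' + k + 1)), ∀ j ≤ k,
      w (r' + j) = z k (r' + j) := fun k w hw j hj =>
    mem_cylinder_iff.1 hw _ (lt_of_le_of_lt (by omega) (hbig k))
  refine ⟨fun k => (z k, Function.update a r (κ k), max (R k) (r + 1),
    max (max (R k) (R' k)) (r' + k + 1)), hzmem, fun k => update_mem_cylinder' a le_rfl _,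
    fun k => lt_of_lt_of_le (Nat.lt_succ_self _) (le_max_right _ _),
    fun k => (Nat.le_add_right _ _).trans_lt (hbig k), ?_, ?_, ?_⟩
  · have key : ∀ k j, k < j → ∀ w ∈ cylinder (z k) (max (max (R k) (R' k)) (r' + k + 1)),
        w ∉ cylinder (z j) (max (max (R j) (R' j)) (r' + j + 1)) := by
      intro k j hkj w hw hw'
      have h1 := hcyl k w hw k le_rfl
      have h2 := hcyl j w hw' k hkj.le
      rw [h1] at h2
      simp [hz, Function.update_of_ne (show r' + k ≠ r' + j by omega)] at h2
    intro k j w hw hw'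
    rcases lt_trichotomy k j with h | h | h
    · exact absurd hw' (key k j h w hw)
    · exact h
    · exact absurd hw (key j k h w hw')
  · intro k j w hw α hα w' hw' α' hα' heq
    refine hκ ?_
    have h1 := hR k w (cylinder_anti _ (by simp) hw) α (cylinder_anti _ (by simp) hα)
    have h2 := hR j w' (cylinder_anti _ (by simp) hw') α' (cylinder_anti _ (by simp) hα')
    exact h1.symm.trans (heq.trans h2)
  · intro k w hw
    exact hR' k w (cylinder_anti _ (by simp) hw)

theorem exists_transversal (hΨ : Continuous fun p : (ℕ → Bool) × (ℕ → ℕ) => Ψ p.1 p.2)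
    (hl : ∀ s, Continuous fun y => l y s)
    (hsplit : ∀ y β γ n, res β n = res γ n →
      Ψ y β (l y (res β n)) = Ψ y γ (l y (res β n)) → β n = γ n) :
    ∃ (Y : (ℕ → ℕ) → ℕ → Bool) (a : (ℕ → ℕ) → ℕ → ℕ),
      Function.Injective Y ∧ Superp fun α => Ψ (Y α) (a α) := by
  choose! F hF using exists_children hΨ hl hsplit
  obtain ⟨n0, hn0⟩ := exists_cylinder_eq (hl []) (fun _ => false)
  let N : List ℕ → (ℕ → Bool) × (ℕ → ℕ) × ℕ × ℕ := fun s =>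
    List.rec ((fun _ => false), (fun _ => 0), 0, n0) (fun k _ d => F d k) s
  have hconst : ∀ s, ∀ y ∈ cylinder (N s).1 (N s).2.2.2,
      l y (res (N s).2.1 (N s).2.2.1) = l (N s).1 (res (N s).2.1 (N s).2.2.1) := by
    intro s
    induction s with
    | nil => exact hn0
    | cons k s ih => exact (hF (N s) ih).const k
  have hN : ∀ s, ChildSpec Ψ l (N s) fun k => N (k :: s) := fun s => hF (N s) (hconst s)
  have hmY : ∀ α : ℕ → ℕ, StrictMono fun n => (N (res α n)).2.2.2 := fun α =>
    strictMono_nat_of_lt_succ fun n => (hN _).ltY _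
  have hmA : ∀ α : ℕ → ℕ, StrictMono fun n => (N (res α n)).2.2.1 := fun α =>
    strictMono_nat_of_lt_succ fun n => (hN _).ltA _
  have hY : ∀ (α : ℕ → ℕ) n, diag (fun n => (N (res α n)).1) ∈
      cylinder (N (res α n)).1 (N (res α n)).2.2.2 := fun α n =>
    mem_cylinder_iff.2 fun i hi => diag_eq (fun n => (hmY α).id_le n) (hmY α).monotone
      (fun n i hi => mem_cylinder_iff.1 ((hN (res α n)).memY (α n)) i hi) n i hi
  have hA : ∀ (α : ℕ → ℕ) n, diag (fun n => (N (res α n)).2.1) ∈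
      cylinder (N (res α n)).2.1 (N (res α n)).2.2.1 := fun α n =>
    mem_cylinder_iff.2 fun i hi => diag_eq (fun n => (hmA α).id_le n) (hmA α).monotone
      (fun n i hi => mem_cylinder_iff.1 ((hN (res α n)).memA (α n)) i hi) n i hi
  refine ⟨fun α => diag fun n => (N (res α n)).1, fun α => diag fun n => (N (res α n)).2.1,
    ?_, ?_, ?_⟩
  · intro α β h
    dsimp only at h
    have : ∀ n, res α n = res β n := by
      intro n
      induction n with
      | zero => simp
      | succ n ih =>
        have h1 := hY α (n + 1)
        have h2 := hY β (n + 1)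
        rw [← h, res_succ, ← ih] at h2
        rw [res_succ] at h1
        rw [res_succ, res_succ, ih, (hN (res α n)).disj _ _ _ h1 h2]
    exact res_injective (funext this)
  · exact hΨ.comp ((continuous_diag_res fun s => (N s).1).prodMk
      (continuous_diag_res fun s => (N s).2.1))
  · intro α n
    refine ⟨l (N (res α n)).1 (res (N (res α n)).2.1 (N (res α n)).2.2.1),
      fun β hβ γ hγ heq => ?_⟩
    have h1 := hY β (n + 1)
    have h2 := hA β (n + 1)
    have h3 := hY γ (n + 1)
    have h4 := hA γ (n + 1)
    rw [res_succ, res_eq_of_mem_cylinder hβ] at h1 h2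
    rw [res_succ, res_eq_of_mem_cylinder hγ] at h3 h4
    exact (hN (res α n)).split _ _ _ h1 _ h2 _ h3 _ h4 heq

section Category

variable {F : Type*} [TopologicalSpace F]

theorem exists_isOpen_isMeagre_diff {s : Set F} (hs : BaireMeasurableSet s) :
    ∃ O, IsOpen O ∧ IsMeagre (s \ O) ∧ IsMeagre (O \ s) := by
  obtain ⟨O, hO, h⟩ := hs.residualEq_isOpen
  refine ⟨O, hO, ?_, ?_⟩
  · filter_upwards [h] with x hx
    have hx' : (x ∈ s) = (x ∈ O) := hx
    simp [hx']
  · filter_upwards [h] with x hx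
    have hx' : (x ∈ s) = (x ∈ O) := hx
    simp [hx']

theorem baireMeasurableSet_of_isMeagre_diff {s t : Set F} (ht : BaireMeasurableSet t)
    (h1 : IsMeagre (s \ t)) (h2 : IsMeagre (t \ s)) : BaireMeasurableSet s := by
  refine ht.congr ?_
  have h1' : (s \ t)ᶜ ∈ residual F := h1
  have h2' : (t \ s)ᶜ ∈ residual F := h2
  filter_upwards [h1', h2'] with x hx1 hx2
  refine propext ⟨fun h => ?_, fun h => ?_⟩
  · by_contra hc; exact hx2 ⟨h, hc⟩
  · by_contra hc; exact hx1 ⟨h, hc⟩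

variable [SecondCountableTopology F]

/-- The points at which `B` is locally non-meagre. -/
def meagreHull (B : Set F) : Set F :=
  (⋃ V ∈ {V ∈ TopologicalSpace.countableBasis F | IsMeagre (V ∩ B)}, V)ᶜ

theorem isClosed_meagreHull (B : Set F) : IsClosed (meagreHull B) :=
  (isOpen_biUnion fun _ hV => TopologicalSpace.isOpen_of_mem_countableBasis hV.1).isClosed_compl

theorem isMeagre_diff_meagreHull (B : Set F) : IsMeagre (B \ meagreHull B) := by
  have hc : {V ∈ TopologicalSpace.countableBasis F | IsMeagre (V ∩ B)}.Countable :=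
    (TopologicalSpace.countable_countableBasis F).mono fun _ h => h.1
  have := hc.to_subtype
  refine (isMeagre_iUnion
    (f := fun V : {V ∈ TopologicalSpace.countableBasis F | IsMeagre (V ∩ B)} => V.1 ∩ B)
    fun V => V.2.2).mono ?_
  rintro x ⟨hx, hx'⟩
  simp only [meagreHull, mem_compl_iff, not_not, mem_iUnion] at hx'
  obtain ⟨V, hV, hxV⟩ := hx'
  exact mem_iUnion.2 ⟨⟨V, hV⟩, hxV, hx⟩

theorem disjoint_meagreHull {B V : Set F} (hV : IsOpen V) (h : IsMeagre (V ∩ B)) :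
    Disjoint V (meagreHull B) := by
  rw [Set.disjoint_left]
  intro x hx hx'
  obtain ⟨W, hW, hxW, hWV⟩ :=
    (TopologicalSpace.isBasis_countableBasis F).exists_subset_of_mem_open hx hV
  exact hx' (mem_biUnion (show W ∈ {V ∈ TopologicalSpace.countableBasis F | IsMeagre (V ∩ B)}
    from ⟨hW, h.mono (inter_subset_inter_left _ hWV)⟩) hxW)

theorem meagreHull_subset_closure (B : Set F) : meagreHull B ⊆ closure B := by
  intro x hx
  by_contra hc
  have hd := disjoint_meagreHull (B := B) (V := (closure B)ᶜ) isClosed_closure.isOpen_compl (by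
    have : (closure B)ᶜ ∩ B = ∅ := by
      ext y; simp only [mem_inter_iff, mem_compl_iff, mem_empty_iff_false, iff_false, not_and]
      exact fun h h' => h (subset_closure h')
    rw [this]; exact IsMeagre.empty)
  exact Set.disjoint_left.1 hd hc hx

theorem isMeagre_meagreHull_diff {ι : Type*} [Countable ι] {B : Set F} {C : ι → Set F}
    (h : B ⊆ ⋃ k, C k) : IsMeagre (meagreHull B \ ⋃ k, meagreHull (C k)) := by
  set Q := meagreHull B \ ⋃ k, meagreHull (C k) with hQ
  have hQm : BaireMeasurableSet Q := by
    borelize F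
    exact ((isClosed_meagreHull B).measurableSet.diff
      (MeasurableSet.iUnion fun k => (isClosed_meagreHull (C k)).measurableSet)).baireMeasurableSet
  obtain ⟨O, hO, h1, h2⟩ := exists_isOpen_isMeagre_diff hQm
  have hd : Disjoint O (meagreHull B) := by
    refine disjoint_meagreHull hO ((h2.union (isMeagre_iUnion fun k =>
      isMeagre_diff_meagreHull (C k))).mono ?_)
    rintro x ⟨hxO, hxB⟩
    by_cases hx : x ∈ Q
    · obtain ⟨k, hk⟩ := mem_iUnion.1 (h hxB)
      exact Or.inr (mem_iUnion.2 ⟨k, hk, fun hk' => hx.2 (mem_iUnion.2 ⟨k, hk'⟩)⟩)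
    · exact Or.inl ⟨hxO, hx⟩
  refine h1.mono ?_
  intro x hx
  exact ⟨hx, fun hxO => Set.disjoint_left.1 hd hxO hx.1⟩

theorem baireMeasurableSet_range [T2Space F] {q : (ℕ → ℕ) → F} (hq : Continuous q) :
    BaireMeasurableSet (range q) := by
  let B : List ℕ → Set F := fun s => q '' {b | res b s.length = s}
  have hB : ∀ s, B s ⊆ ⋃ k, B (k :: s) := by
    rintro s _ ⟨b, hb, rfl⟩
    refine mem_iUnion.2 ⟨b s.length, b, ?_, rfl⟩
    have hb' : res b s.length = s := hb
    simp [hb']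
  have hB0 : B [] = range q := by simp [B]
  refine baireMeasurableSet_of_isMeagre_diff (t := meagreHull (B [])) ?_ ?_ ?_
  · borelize F
    exact (isClosed_meagreHull _).measurableSet.baireMeasurableSet
  · rw [← hB0]; exact isMeagre_diff_meagreHull _
  · refine (isMeagre_iUnion fun s => isMeagre_meagreHull_diff (hB s)).mono ?_
    rintro x ⟨hx, hxq⟩
    by_contra hcon
    have hstep : ∀ s, x ∈ meagreHull (B s) → ∃ k, x ∈ meagreHull (B (k :: s)) := by
      intro s hs
      by_contra hk
      exact hcon (mem_iUnion.2 ⟨s, hs, by simpa using hk⟩)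
    choose! K hK using hstep
    let S : ℕ → List ℕ := fun n => Nat.rec [] (fun _ s => K s :: s) n
    have hS : ∀ n, x ∈ meagreHull (B (S n)) := by
      intro n
      induction n with
      | zero => exact hx
      | succ n ih => exact hK _ ih
    let α : ℕ → ℕ := fun n => K (S n)
    have hα : ∀ n, res α n = S n := by
      intro n
      induction n with
      | zero => rfl
      | succ n ih => rw [res_succ, ih]
    have hne : q α ≠ x := fun h => hxq ⟨α, h⟩
    obtain ⟨U, V, hU, hV, hqU, hxV, hUV⟩ := t2_separation hne
    obtain ⟨n, hn⟩ := exists_cylinder_subset (hq.continuousAt.preimage_mem_nhds (hU.mem_nhds hqU))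
    obtain ⟨_, hyV, b, hb, rfl⟩ :=
      mem_closure_iff.1 (meagreHull_subset_closure _ (hS n)) V hV hxV
    refine Set.disjoint_left.1 hUV (hn ?_) hyV
    rw [cylinder_eq_res]
    have hb' : res b (S n).length = S n := hb
    rw [← hα, res_length] at hb'
    exact hb'

theorem baireMeasurableSet_of_analyticSet [T2Space F] {s : Set F} (hs : AnalyticSet s) :
    BaireMeasurableSet s := by
  rw [AnalyticSet] at hs
  rcases hs with rfl | ⟨f, hf, rfl⟩
  · exact IsMeagre.empty.baireMeasurableSet
  · exact baireMeasurableSet_range hf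

end Category

theorem not_exists_generic_bound {X : Type*} [TopologicalSpace X] [BaireSpace X] [Nonempty X]
    {h : X → ℕ → ℕ} (hh : Continuous h)
    (hunb : ∀ U : Set X, IsOpen U → U.Nonempty → ∃ i, ∀ M, ∃ y ∈ U, M < h y i)
    {G : Set X} (hG : G ∈ residual X) (ψ : ℕ → ℕ) :
    ¬ ∀ y ∈ G, ∀ᶠ i in atTop, h y i ≤ ψ i := by
  intro hcon
  refine not_isMeagre_of_mem_residual hG
    ((isMeagre_iUnion (f := fun c : ℕ => {y | ∀ i, h y i ≤ ψ i + c}) fun c => ?_).mono ?_)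
  · have hcl : IsClosed {y | ∀ i, h y i ≤ ψ i + c} := by
      simp only [ofPred_forall]
      exact isClosed_iInter fun i =>
        isClosed_le ((continuous_apply i).comp hh) continuous_const
    refine (hcl.isNowhereDense_iff.2 ?_).isMeagre
    by_contra hne
    obtain ⟨i, hi⟩ := hunb _ isOpen_interior (nonempty_iff_ne_empty.2 hne)
    obtain ⟨y, hy, hM⟩ := hi (ψ i + c)
    have h1 : ∀ i, h y i ≤ ψ i + c := interior_subset hy
    exact absurd (h1 i) (not_le.2 hM)
  · intro y hy
    obtain ⟨c, hc⟩ := exists_le_add_of_eventually_le (hcon y hy)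
    exact mem_iUnion.2 ⟨c, hc⟩

section Uniformization

variable {F : Type*} [TopologicalSpace F]

theorem exists_residual_continuousOn {φ : F → ℕ → ℕ}
    (h : ∀ i j, BaireMeasurableSet {y | φ y i = j}) : ∃ G ∈ residual F, ContinuousOn φ G := by
  choose O hO hφO using fun i j => (h i j).residualEq_isOpen
  refine ⟨{y | ∀ i j, φ y i = j ↔ y ∈ O i j}, ?_, ?_⟩
  · refine eventually_countable_forall.2 fun i => eventually_countable_forall.2 fun j => ?_
    filter_upwards [hφO i j] with y hy
    exact Iff.of_eq hy
  · refine continuousOn_pi.2 fun i y hy => ?_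
    refine tendsto_nhds_of_eventually_eq ?_
    refine mem_nhdsWithin.2 ⟨O i (φ y i), hO _ _, (hy i _).1 rfl, ?_⟩
    rintro z ⟨hz, hzG⟩
    exact (hzG i _).2 hz

/-- Over a comeagre set of `y`, the fibre of `Z` over `y` is dominated continuously in `y`. -/
def UnifBdd (q₁ : (ℕ → ℕ) → F) (q₂ : (ℕ → ℕ) → ℕ → ℕ) (Z : Set (ℕ → ℕ)) : Prop :=
  ∃ φ : F → ℕ → ℕ, ∃ G ∈ residual F, ContinuousOn φ G ∧
    ∀ b ∈ Z, q₁ b ∈ G → ∀ᶠ i in atTop, q₂ b i ≤ φ (q₁ b) i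

variable {q₁ : (ℕ → ℕ) → F} {q₂ : (ℕ → ℕ) → ℕ → ℕ}

theorem UnifBdd.mono {Z Z' : Set (ℕ → ℕ)} (hZ : Z' ⊆ Z) (h : UnifBdd q₁ q₂ Z) :
    UnifBdd q₁ q₂ Z' := by
  obtain ⟨φ, G, hG, hc, hb⟩ := h
  exact ⟨φ, G, hG, hc, fun b hbZ => hb b (hZ hbZ)⟩

theorem UnifBdd.iUnion {ι : Type*} [Countable ι] {Z : ι → Set (ℕ → ℕ)}
    (h : ∀ n, UnifBdd q₁ q₂ (Z n)) : UnifBdd q₁ q₂ (⋃ n, Z n) := by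
  rcases isEmpty_or_nonempty ι with hι | hι
  · exact ⟨fun _ => 0, univ, univ_mem, continuousOn_const, by simp⟩
  obtain ⟨e, he⟩ := exists_surjective_nat ι
  choose φ G hG hc hb using h
  refine ⟨fun y i => (Finset.range (i + 1)).sup fun n => φ (e n) y i, ⋂ n, G n,
    countable_iInter_mem.2 hG, continuousOn_pi.2 fun i => ?_, ?_⟩
  · exact ContinuousOn.finset_sup_apply fun n _ =>
      (continuous_apply i).comp_continuousOn ((hc (e n)).mono (iInter_subset _ _))
  · intro b hbZ hbG
    obtain ⟨k, hk⟩ := mem_iUnion.1 hbZ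
    obtain ⟨n, rfl⟩ := he k
    filter_upwards [hb (e n) b hk (mem_iInter.1 hbG _), eventually_ge_atTop n] with i h1 h2
    exact h1.trans (Finset.le_sup (f := fun n => φ (e n) (q₁ b) i)
      (Finset.mem_range.2 (by omega)))

theorem UnifBdd.union {Z Z' : Set (ℕ → ℕ)} (hZ : UnifBdd q₁ q₂ Z) (hZ' : UnifBdd q₁ q₂ Z') :
    UnifBdd q₁ q₂ (Z ∪ Z') := by
  rw [union_eq_iUnion]
  exact UnifBdd.iUnion fun i => by cases i <;> assumption

theorem isOpen_res_eq (s : List ℕ) : IsOpen {b : ℕ → ℕ | res b s.length = s} := by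
  refine isOpen_iff_mem_nhds.2 fun b hb => ?_
  refine mem_of_superset ((isOpen_cylinder _ b s.length).mem_nhds (self_mem_cylinder _ _))
    fun c hc => ?_
  exact (res_eq_of_mem_cylinder hc).trans hb

theorem isClosed_res_eq (s : List ℕ) : IsClosed {b : ℕ → ℕ | res b s.length = s} := by
  refine isClosed_of_closure_subset fun b hb => ?_
  obtain ⟨c, hc, hc'⟩ := mem_closure_iff.1 hb _ (isOpen_cylinder _ b s.length)
    (self_mem_cylinder _ _)
  exact (res_eq_of_mem_cylinder hc).symm.trans hc'

theorem UnifBdd.of_locally :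
    UnifBdd q₁ q₂ {b | ∃ n, UnifBdd q₁ q₂ (cylinder b n)} := by
  have h := UnifBdd.iUnion (q₁ := q₁) (q₂ := q₂)
    (ι := {t : List ℕ // UnifBdd q₁ q₂ {b | res b t.length = t}})
    (Z := fun t => {b | res b t.1.length = t.1}) fun t => t.2
  refine h.mono ?_
  rintro b ⟨n, hn⟩
  refine mem_iUnion.2 ⟨⟨res b n, hn.mono fun c hc => ?_⟩, by simp⟩
  rw [cylinder_eq_res]
  simpa using hc

theorem isOpen_unifBdd_locally : IsOpen {b | ∃ n, UnifBdd q₁ q₂ (cylinder b n)} := by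
  refine isOpen_iff_mem_nhds.2 ?_
  rintro b ⟨n, hn⟩
  refine mem_of_superset ((isOpen_cylinder _ b n).mem_nhds (self_mem_cylinder _ _))
    fun c hc => ⟨n, ?_⟩
  rwa [mem_cylinder_iff_eq.1 hc]

theorem UnifBdd.of_fibre_bound {Z : Set (ℕ → ℕ)} {Y : Set F} {P : ℕ → ℕ → Set F}
    (hP : ∀ i j, BaireMeasurableSet (P i j)) (hPZ : ∀ b ∈ Z, ∀ i j, j ≤ q₂ b i → q₁ b ∈ P i j)
    (hY : ∀ y ∈ Y, ∀ i, ∃ j, y ∉ P i j) (hZY : ∃ G ∈ residual F, ∀ b ∈ Z, q₁ b ∈ G → q₁ b ∈ Y) :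
    UnifBdd q₁ q₂ Z := by
  classical
  let φ : F → ℕ → ℕ := fun y i => if h : ∃ j, y ∉ P i j then Nat.find h else 0
  have hφ : ∀ i j, BaireMeasurableSet {y | φ y i = j} := by
    intro i j
    have heq : {y | φ y i = j} = ((⋂ k, ⋂ (_ : k < j), P i k) ∩ (P i j)ᶜ) ∪
        (if j = 0 then ⋂ k, P i k else ∅) := by
      ext y
      simp only [mem_ofPred_eq, mem_union, mem_inter_iff, mem_iInter, mem_compl_iff, φ]
      by_cases h : ∃ j, y ∉ P i j
      · rw [dif_pos h, Nat.find_eq_iff]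
        have : y ∉ (if j = 0 then ⋂ k, P i k else ∅ : Set F) := by
          split_ifs
          · simpa using h
          · simp
        simp only [this, or_false, not_not]
        exact and_comm
      · rw [dif_neg h]
        push Not at h
        by_cases hj : j = 0 <;> simp [h, hj, eq_comm]
    rw [heq]
    refine BaireMeasurableSet.union (BaireMeasurableSet.inter (.iInter fun k => .iInter fun _ =>
      hP i k) (hP i j).compl) ?_
    split_ifs
    · exact .iInter fun k => hP i k
    · exact IsMeagre.empty.baireMeasurableSet
  obtain ⟨G, hG, hc⟩ := exists_residual_continuousOn hφ
  obtain ⟨G', hG', hGY⟩ := hZY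
  refine ⟨φ, G ∩ G', inter_mem hG hG', hc.mono inter_subset_left, fun b hb hbG =>
    Eventually.of_forall fun i => ?_⟩
  have hex := hY _ (hGY b hb hbG.2) i
  by_contra! hlt
  have h1 : φ (q₁ b) i = Nat.find hex := dif_pos hex
  exact Nat.find_spec hex (hPZ b hb i _ (h1 ▸ hlt.le))

theorem unifBdd_univ_of_fibres [SecondCountableTopology F] [T2Space F] (hq₁ : Continuous q₁)
    (hq₂ : Continuous q₂) (hfib : ∀ y, SigmaBdd (q₂ '' (q₁ ⁻¹' {y}))) :
    UnifBdd q₁ q₂ univ := by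
  set W : Set (ℕ → ℕ) := {b | ∃ n, UnifBdd q₁ q₂ (cylinder b n)} with hW
  have hWo : IsOpen W := isOpen_unifBdd_locally
  have hWu : UnifBdd q₁ q₂ W := UnifBdd.of_locally
  let Z : List ℕ → Set (ℕ → ℕ) := fun s => Wᶜ ∩ {b | res b s.length = s}
  let P : List ℕ → ℕ → ℕ → Set F := fun s i j => q₁ '' (Z s ∩ {b | j ≤ q₂ b i})
  let Y : List ℕ → Set F := fun s => q₁ '' Z s ∩ ⋂ i, (⋂ j, P s i j)ᶜ
  have hZc : ∀ s, IsClosed (Z s) := fun s => hWo.isClosed_compl.inter (isClosed_res_eq s)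
  have hP : ∀ s i j, BaireMeasurableSet (P s i j) := fun s i j =>
    baireMeasurableSet_of_analyticSet (((hZc s).inter
      (isClosed_le continuous_const ((continuous_apply i).comp hq₂))).analyticSet.image_of_continuous
      hq₁)
  have hY : ∀ s, IsMeagre (Y s) := by
    intro s
    have hYm : BaireMeasurableSet (Y s) := BaireMeasurableSet.inter
      (baireMeasurableSet_of_analyticSet ((hZc s).analyticSet.image_of_continuous hq₁))
      (.iInter fun i => (BaireMeasurableSet.iInter fun j => hP s i j).compl)
    obtain ⟨O, hO, h1, h2⟩ := exists_isOpen_isMeagre_diff hYm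
    rcases (Y s ∩ O).eq_empty_or_nonempty with hemp | ⟨y, hyY, hyO⟩
    · refine h1.mono ?_
      intro x hx
      refine ⟨hx, fun hxO => ?_⟩
      exact (hemp ▸ (show x ∈ Y s ∩ O from ⟨hx, hxO⟩) : x ∈ (∅ : Set F))
    exfalso
    obtain ⟨b, ⟨hbW, hbs⟩, rfl⟩ := hyY.1
    obtain ⟨n, hn⟩ := exists_cylinder_subset (inter_mem
      ((isOpen_res_eq s).mem_nhds hbs) (hq₁.continuousAt.preimage_mem_nhds (hO.mem_nhds hyO)))
    refine hbW ⟨n, (hWu.union (UnifBdd.of_fibre_bound (Z := cylinder b n ∩ Wᶜ) (Y := Y s)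
      (P := P s) (hP s) ?_ ?_ ⟨_, h2, ?_⟩)).mono ?_⟩
    · exact fun c hc i j hj => ⟨c, ⟨⟨hc.2, (hn hc.1).1⟩, hj⟩, rfl⟩
    · intro y hy i
      simpa using mem_iInter.1 hy.2 i
    · intro c hc hcG
      by_contra hcY
      exact hcG ⟨(hn hc.1).2, hcY⟩
    · intro c hc
      by_cases hcW : c ∈ W
      · exact Or.inl hcW
      · exact Or.inr ⟨hc, hcW⟩
  obtain ⟨φ, G, hG, hc, hb⟩ := hWu
  refine ⟨φ, G ∩ ⋂ s, (Y s)ᶜ, inter_mem hG (countable_iInter_mem.2 hY),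
    hc.mono inter_subset_left, fun b _ hbG => ?_⟩
  by_cases hbW : b ∈ W
  · exact hb b hbW hbG.1
  exfalso
  have hXc : IsClosed (Wᶜ ∩ q₁ ⁻¹' {q₁ b}) :=
    hWo.isClosed_compl.inter (isClosed_singleton.preimage hq₁)
  have : PolishSpace (Wᶜ ∩ q₁ ⁻¹' {q₁ b} : Set (ℕ → ℕ)) := hXc.polishSpace
  have : Nonempty (Wᶜ ∩ q₁ ⁻¹' {q₁ b} : Set (ℕ → ℕ)) := ⟨⟨b, hbW, rfl⟩⟩
  have : BaireSpace (Wᶜ ∩ q₁ ⁻¹' {q₁ b} : Set (ℕ → ℕ)) := by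
    let _ := TopologicalSpace.upgradeIsCompletelyMetrizable (Wᶜ ∩ q₁ ⁻¹' {q₁ b} : Set (ℕ → ℕ))
    infer_instance
  obtain ⟨ψ, hψ⟩ := hfib (q₁ b)
  refine not_exists_generic_bound (X := (Wᶜ ∩ q₁ ⁻¹' {q₁ b} : Set (ℕ → ℕ)))
    (h := fun x => q₂ x.1) (hq₂.comp continuous_subtype_val) ?_ univ_mem ψ
    (fun x _ => hψ _ ⟨x.1, x.2.2, rfl⟩)
  rintro U hU ⟨x, hxU⟩
  obtain ⟨U', hU', rfl⟩ := isOpen_induced_iff.1 hU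
  obtain ⟨n, hn⟩ := exists_cylinder_subset (hU'.mem_nhds hxU)
  have hxZ : x.1 ∈ Z (res x.1 n) := ⟨x.2.1, by simp⟩
  have hxY := mem_iInter.1 hbG.2 (res x.1 n)
  have hbZ : q₁ b ∈ q₁ '' Z (res x.1 n) := ⟨x.1, hxZ, x.2.2⟩
  have hex : ∃ i, ∀ j, q₁ b ∈ P (res x.1 n) i j := by
    by_contra! hcon
    exact hxY ⟨hbZ, mem_iInter.2 fun i => by simpa using hcon i⟩
  obtain ⟨i, hi⟩ := hex
  refine ⟨i, fun M => ?_⟩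
  obtain ⟨c, ⟨⟨hcW, hcs⟩, hcM⟩, hcb⟩ := hi (M + 1)
  refine ⟨⟨c, hcW, hcb⟩, hn ?_, hcM⟩
  rw [cylinder_eq_res]
  have hcs' : res c (res x.1 n).length = res x.1 n := hcs
  rwa [res_length] at hcs'

end Uniformization

section KuratowskiUlam

variable {X Y : Type*} [TopologicalSpace X] [TopologicalSpace Y]

theorem eventually_residual_section [SecondCountableTopology Y] {R : Set (X × Y)}
    (hR : R ∈ residual (X × Y)) : ∀ᶠ x in residual X, {y | (x, y) ∈ R} ∈ residual Y := by
  obtain ⟨S, hSo, hSd, hSc, hSR⟩ := mem_residual_iff.1 hR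
  have key : ∀ D ∈ S, ∀ᶠ x in residual X, {y | (x, y) ∈ D} ∈ residual Y := by
    intro D hD
    have h1 : ∀ V ∈ TopologicalSpace.countableBasis Y,
        ∀ᶠ x in residual X, ∃ y ∈ V, (x, y) ∈ D := by
      intro V hV
      have hVo := TopologicalSpace.isOpen_of_mem_countableBasis hV
      refine residual_of_dense_open ?_ ?_
      · have : {x | ∃ y ∈ V, (x, y) ∈ D} = Prod.fst '' (D ∩ univ ×ˢ V) := by
          ext x; constructor
          · rintro ⟨y, hy, hD⟩; exact ⟨(x, y), ⟨hD, trivial, hy⟩, rfl⟩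
          · rintro ⟨⟨x, y⟩, ⟨hD, -, hy⟩, rfl⟩; exact ⟨y, hy, hD⟩
        exact this ▸ isOpenMap_fst _ ((hSo D hD).inter (isOpen_univ.prod hVo))
      · refine dense_iff_inter_open.2 fun U hU hUne => ?_
        obtain ⟨⟨x, y⟩, ⟨hx, hy⟩, hxy⟩ := dense_iff_inter_open.1 (hSd D hD) (U ×ˢ V)
          (hU.prod hVo) (hUne.prod (TopologicalSpace.nonempty_of_mem_countableBasis hV))
        exact ⟨x, hx, y, hy, hxy⟩
    have h2 := (eventually_countable_ball (TopologicalSpace.countable_countableBasis Y)).2 h1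
    filter_upwards [h2] with x hx
    refine residual_of_dense_open ((hSo D hD).preimage (Continuous.prodMk_right x)) ?_
    refine (TopologicalSpace.isBasis_countableBasis Y).dense_iff.2 fun V hV _ => ?_
    obtain ⟨y, hy, hD⟩ := hx V hV
    exact ⟨y, hy, hD⟩
  filter_upwards [(eventually_countable_ball hSc).2 key] with x hx
  have h3 : ∀ᶠ y in residual Y, ∀ D ∈ S, (x, y) ∈ D := (eventually_countable_ball hSc).2 hx
  filter_upwards [h3] with y hy
  exact hSR (mem_sInter.2 hy)

theorem isMeagre_of_isMeagre_section [SecondCountableTopology Y] [BaireSpace X] [BaireSpace Y]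
    {R : Set (X × Y)} (hR : BaireMeasurableSet R) (h : ∀ x, IsMeagre {y | (x, y) ∈ R}) :
    IsMeagre R := by
  obtain ⟨O, hO, h1, h2⟩ := exists_isOpen_isMeagre_diff hR
  have hOx : ∀ᶠ x in residual X, {y | (x, y) ∈ O} = ∅ := by
    filter_upwards [eventually_residual_section (show (O \ R)ᶜ ∈ residual _ from h2)] with x hx
    by_contra hne
    refine not_isMeagre_of_isOpen (hO.preimage (Continuous.prodMk_right x))
      (nonempty_iff_ne_empty.2 hne) (((show IsMeagre {y | (x, y) ∈ O \ R} from hx).union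
        (h x)).mono ?_)
    intro y hy
    by_cases hyR : (x, y) ∈ R
    · exact Or.inr hyR
    · exact Or.inl ⟨hy, hyR⟩
  have hOe : O = ∅ := by
    by_contra hne
    obtain ⟨⟨x, y⟩, hxy⟩ := nonempty_iff_ne_empty.2 hne
    obtain ⟨x', hx', hx'O⟩ := (dense_of_mem_residual hOx).inter_open_nonempty _
      (hO.preimage (Continuous.prodMk_left y)) ⟨x, hxy⟩
    have : y ∈ ({y | (x', y) ∈ O} : Set Y) := hx'
    exact (hx'O ▸ this : y ∈ (∅ : Set Y))
  simpa [hOe] using h1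

end KuratowskiUlam

section Mycielski

theorem isOpenMap_eval_pair {ι K : Type*} [TopologicalSpace K] {s t : ι} (hst : t ≠ s) :
    IsOpenMap fun z : ι → K => (z s, z t) := by
  classical
  exact (IsOpenMap.id.prodMap (isOpenMap_eval (⟨t, hst⟩ : {j // j ≠ s}))).comp
    (Homeomorph.funSplitAt K s).isOpenMap

variable {κ : Type*} [TopologicalSpace κ] [DiscreteTopology κ]

theorem eventually_cylinder_subset {x : ℕ → κ} {U : Set (ℕ → κ)} (hU : U ∈ 𝓝 x) :
    ∀ᶠ n in atTop, cylinder x n ⊆ U := by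
  obtain ⟨n, hn⟩ := exists_cylinder_subset hU
  filter_upwards [eventually_ge_atTop n] with k hk
  exact (cylinder_anti _ hk).trans hn

theorem eventually_cylinder_prod_subset {x y : ℕ → κ} {U : Set ((ℕ → κ) × (ℕ → κ))}
    (hU : U ∈ 𝓝 (x, y)) :
    ∀ᶠ n in atTop, ∀ a ∈ cylinder x n, ∀ b ∈ cylinder y n, (a, b) ∈ U := by
  rw [nhds_prod_eq] at hU
  obtain ⟨U₁, h1, U₂, h2, h⟩ := mem_prod_iff.1 hU
  filter_upwards [eventually_cylinder_subset h1, eventually_cylinder_subset h2] with n hn1 hn2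
  exact fun a ha b hb => h ⟨hn1 ha, hn2 hb⟩

theorem exists_continuous_pairwise_mem {R : Set ((ℕ → Bool) × (ℕ → Bool))}
    (hR : R ∈ residual ((ℕ → Bool) × (ℕ → Bool))) :
    ∃ c : (ℕ → Bool) → ℕ → Bool, Continuous c ∧ ∀ α β, α ≠ β → (c α, c β) ∈ R := by
  obtain ⟨S, hSo, hSd, hSc, hSR⟩ := mem_residual_iff.1 hR
  obtain ⟨D, hD⟩ := (hSc.insert univ).exists_eq_range (insert_nonempty _ _)
  have hDo : ∀ n, IsOpen (D n) := fun n => by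
    rcases (hD ▸ mem_range_self n : D n ∈ insert univ S) with h | h
    · rw [h]; exact isOpen_univ
    · exact hSo _ h
  have hDd : ∀ n, D n ∈ residual _ := fun n => by
    rcases (hD ▸ mem_range_self n : D n ∈ insert univ S) with h | h
    · rw [h]; exact univ_mem
    · exact residual_of_dense_open (hSo _ h) (hSd _ h)
  have hDR : ⋂ n, D n ⊆ R := by
    refine Subset.trans ?_ hSR
    intro x hx
    refine mem_sInter.2 fun t ht => ?_
    obtain ⟨n, rfl⟩ := (hD ▸ mem_insert_of_mem _ ht : t ∈ range D)
    exact mem_iInter.1 hx n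
  let G : Set (List Bool → ℕ → Bool) := {z | ∀ s t, t ≠ s → ∀ n, (z s, z t) ∈ D n}
  have hG : G ∈ residual _ := by
    refine eventually_countable_forall.2 fun s => eventually_countable_forall.2 fun t => ?_
    by_cases hst : t = s
    · exact Eventually.of_forall fun z h => absurd hst h
    have := tendsto_residual_of_isOpenMap
      ((continuous_apply s).prodMk (continuous_apply t)) (isOpenMap_eval_pair (K := ℕ → Bool) hst)
    refine Eventually.mono (eventually_countable_forall.2 fun n => this (hDd n))
      fun z hz _ => hz
  let Good : ℕ → (List Bool → ℕ → Bool) × ℕ → Prop := fun n d => d.1 ∈ G ∧ n ≤ d.2 ∧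
    ∀ s t, t ≠ s → s.length = n → t.length = n → ∀ k ≤ n, ∀ a ∈ cylinder (d.1 s) d.2,
      ∀ b ∈ cylinder (d.1 t) d.2, (a, b) ∈ D k
  have hm : ∀ γ ∈ G, ∀ n N, ∃ m, N ≤ m ∧ Good n (γ, m) := by
    intro γ hγ n N
    have h1 : ∀ᶠ m in atTop, ∀ s ∈ {s : List Bool | s.length = n},
        ∀ t ∈ {s : List Bool | s.length = n}, ∀ k ∈ Iic n, t ≠ s → ∀ a ∈ cylinder (γ s) m,
        ∀ b ∈ cylinder (γ t) m, (a, b) ∈ D k := by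
      refine (eventually_all_finite (List.finite_length_eq Bool n)).2 fun s _ => ?_
      refine (eventually_all_finite (List.finite_length_eq Bool n)).2 fun t _ => ?_
      refine (eventually_all_finite (finite_Iic n)).2 fun k _ => ?_
      by_cases hst : t = s
      · exact Eventually.of_forall fun z h => absurd hst h
      · exact (eventually_cylinder_prod_subset ((hDo k).mem_nhds (hγ s t hst k))).mono
          fun m hm _ => hm
    obtain ⟨m, hm, hm'⟩ := (h1.and (eventually_ge_atTop (max n N))).exists
    exact ⟨m, (le_max_right _ _).trans hm', hγ, (le_max_left _ _).trans hm',
      fun s t hst hs ht k hk => hm s hs t ht k hk hst⟩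
  have hstep : ∀ n d, Good n d → ∃ d', Good (n + 1) d' ∧ d.2 ≤ d'.2 ∧
      ∀ i s, s.length = n → d'.1 (i :: s) ∈ cylinder (d.1 s) d.2 := by
    rintro n ⟨γ, m⟩ ⟨hγ, -, -⟩
    obtain ⟨γ', hγ'U, hγ'⟩ := (dense_of_mem_residual hG).inter_open_nonempty
      ({s : List Bool | s.length = n + 1}.pi fun s => cylinder (γ s.tail) m)
      (isOpen_set_pi (List.finite_length_eq Bool (n + 1)) fun s _ => isOpen_cylinder _ _ _)
      ⟨fun s => γ s.tail, fun s _ => self_mem_cylinder _ _⟩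
    obtain ⟨m', hm', hgood⟩ := hm γ' hγ' (n + 1) m
    exact ⟨(γ', m'), hgood, hm', fun i s hs => hγ'U (i :: s) (by simp [hs])⟩
  choose! F hF1 hF2 hF3 using hstep
  obtain ⟨γ0, hγ0⟩ := (dense_of_mem_residual hG).nonempty
  obtain ⟨m0, -, hm0⟩ := hm γ0 hγ0 0 0
  let N : ℕ → (List Bool → ℕ → Bool) × ℕ := fun n => Nat.rec (γ0, m0) (fun n d => F n d) n
  have hN : ∀ n, Good n (N n) := by
    intro n
    induction n with
    | zero => exact hm0
    | succ n ih => exact hF1 n _ ih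
  let c : (ℕ → Bool) → ℕ → Bool := fun β => diag fun n => (N n).1 (res β n)
  have hc : ∀ β n, c β ∈ cylinder ((N n).1 (res β n)) (N n).2 := fun β n =>
    mem_cylinder_iff.2 fun i hi => diag_eq (x := fun n => (N n).1 (res β n))
      (m := fun n => (N n).2) (fun n => (hN n).2.1)
      (monotone_nat_of_le_succ fun n => hF2 n _ (hN n))
      (fun n i hi => mem_cylinder_iff.1 (hF3 n _ (hN n) (β n) (res β n) (res_length _ _)) i hi)
      n i hi
  refine ⟨c, continuous_pi fun i => continuous_comp_res (fun s => (N (i + 1)).1 s i) (i + 1),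
    fun α β hαβ => hDR (mem_iInter.2 fun k => ?_)⟩
  obtain ⟨d, hd⟩ := Function.ne_iff.1 hαβ
  refine (hN (max (d + 1) k)).2.2 _ _ (fun heq => hd ?_) (res_length _ _) (res_length _ _) k
    (le_max_right _ _) _ (hc α _) _ (hc β _)
  exact (res_eq_res.1 heq (lt_of_lt_of_le (Nat.lt_succ_self d) (le_max_left _ _))).symm

end Mycielski

theorem res_add {κ : Type*} (β : ℕ → κ) (j k : ℕ) :
    res β (j + k) = res (fun i => β (i + k)) j ++ res β k := by
  induction j with
  | zero => simp
  | succ j ih =>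
    rw [Nat.add_right_comm, res_succ, ih, res_succ, List.cons_append]

theorem tendsto_diag {ι : Type*} [TopologicalSpace ι] {x : ℕ → ℕ → ι} {m : ℕ → ℕ}
    (hm : ∀ n, n ≤ m n) (hmono : Monotone m) (h : ∀ n, ∀ i < m n, x (n + 1) i = x n i) :
    Tendsto x atTop (𝓝 (diag x)) := by
  refine tendsto_pi_nhds.2 fun i => tendsto_const_nhds.congr' ?_
  filter_upwards [eventually_gt_atTop i] with n hn
  exact diag_eq hm hmono h n i (hn.trans_le (hm n))

theorem exists_dense_lists : ∃ D : ℕ → List Bool, (∀ n, (D n).length = n) ∧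
    ∀ s, ∃ n, s <:+ D n := by
  have h : ∀ n, ∃ t : List Bool, t.length = n ∧ ∀ s : List Bool, Encodable.encode s = n → s <:+ t := by
    intro n
    by_cases hn : ∃ s : List Bool, Encodable.encode s = n
    · obtain ⟨s, rfl⟩ := hn
      refine ⟨List.replicate (Encodable.encode s - s.length) false ++ s, ?_, fun s' hs' => ?_⟩
      · have := Encodable.length_le_encode s
        simp; omega
      · rw [Encodable.encode_injective hs']; exact List.suffix_append _ _
    · exact ⟨List.replicate n false, by simp, fun s hs => absurd ⟨s, hs⟩ hn⟩
  choose D hD1 hD2 using h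
  exact ⟨D, hD1, fun s => ⟨_, hD2 _ s rfl⟩⟩

/-- `B` meets only countably many classes of `E`. -/
def CountablyManyClasses {X : Type*} (E : X → X → Prop) (B : Set X) : Prop :=
  ∃ f : ℕ → X, ∀ x ∈ B, ∃ n, E (f n) x

section Classes

variable {X : Type*} {E : X → X → Prop}

theorem CountablyManyClasses.mono {A B : Set X} (h : A ⊆ B) (hB : CountablyManyClasses E B) :
    CountablyManyClasses E A := by
  obtain ⟨f, hf⟩ := hB
  exact ⟨f, fun x hx => hf x (h hx)⟩

theorem CountablyManyClasses.iUnion [Nonempty X] {ι : Type*} [Countable ι] {B : ι → Set X}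
    (h : ∀ i, CountablyManyClasses E (B i)) : CountablyManyClasses E (⋃ i, B i) := by
  rcases isEmpty_or_nonempty ι with hι | hι
  · exact ⟨fun _ => Classical.arbitrary X, by simp⟩
  choose f hf using h
  obtain ⟨e, he⟩ := exists_surjective_nat (ι × ℕ)
  refine ⟨fun n => f (e n).1 (e n).2, fun x hx => ?_⟩
  obtain ⟨i, hi⟩ := mem_iUnion.1 hx
  obtain ⟨k, hk⟩ := hf i x hi
  obtain ⟨n, hn⟩ := he (i, k)
  exact ⟨n, by simpa only [hn] using hk⟩

theorem CountablyManyClasses.union [Nonempty X] {A B : Set X} (hA : CountablyManyClasses E A)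
    (hB : CountablyManyClasses E B) : CountablyManyClasses E (A ∪ B) := by
  rw [union_eq_iUnion]
  exact .iUnion fun i => by cases i <;> assumption

theorem exists_not_of_not_countablyManyClasses [Nonempty X] {B : Set X}
    (h : ¬ CountablyManyClasses E B) : ∃ x ∈ B, ∃ y ∈ B, ¬ E x y := by
  by_contra! hcon
  rcases B.eq_empty_or_nonempty with rfl | ⟨x, hx⟩
  · exact h ⟨fun _ => Classical.arbitrary X, by simp⟩
  · exact h ⟨fun _ => x, fun y hy => ⟨0, hcon x hx y hy⟩⟩

end Classes

section Configurations

variable (D : ℕ → List Bool) (u v : (ℕ → ℕ) → ℕ → ℕ)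

/-- Homomorphic images of the finite approximations of the graph `G₀` with vertices in `Y`. -/
def Conf (Y : Set (ℕ → ℕ)) (n : ℕ) :
    Set ((List Bool → ℕ → ℕ) × (List Bool → ℕ → ℕ)) :=
  {z | (∀ t, t.length < n → u (z.2 t) = z.1 (t ++ false :: D (n - 1 - t.length)) ∧
      v (z.2 t) = z.1 (t ++ true :: D (n - 1 - t.length))) ∧ ∀ s, s.length = n → z.1 s ∈ Y}

variable {D u v}

theorem Conf.mono {Y Y' : Set (ℕ → ℕ)} (h : Y ⊆ Y') {n : ℕ} : Conf D u v Y n ⊆ Conf D u v Y' n :=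
  fun _ hz => ⟨hz.1, fun s hs => h (hz.2 s hs)⟩

theorem exists_large_set {E : (ℕ → ℕ) → (ℕ → ℕ) → Prop} (hD : ∀ n, (D n).length = n)
    (hE : ¬ CountablyManyClasses E univ) :
    ∃ Y : Set (ℕ → ℕ), Y.Nonempty ∧ ∀ n, ∀ O, IsOpen O → (Conf D u v Y n ∩ O).Nonempty →
      ∃ z ∈ Conf D u v Y n ∩ O, ∃ z' ∈ Conf D u v Y n ∩ O, ¬ E (z.1 (D n)) (z'.1 (D n)) := by
  set 𝓑 := TopologicalSpace.countableBasis ((List Bool → ℕ → ℕ) × (List Bool → ℕ → ℕ)) with h𝓑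
  have : Countable 𝓑 := (TopologicalSpace.countable_countableBasis _).to_subtype
  let A : Set (ℕ → ℕ) → ℕ → 𝓑 → Set (ℕ → ℕ) := fun Y n O =>
    (fun z => z.1 (D n)) '' (Conf D u v Y n ∩ O.1)
  have hA : ∀ Y Y' n O, Y ⊆ Y' → A Y n O ⊆ A Y' n O := fun Y Y' n O h =>
    image_mono (inter_subset_inter_left _ (Conf.mono h))
  have h1 : ∀ n O, ∃ Y, CountablyManyClasses E Yᶜ ∧ ∀ Y', CountablyManyClasses E Y'ᶜ →
      CountablyManyClasses E (A Y' n O) → CountablyManyClasses E (A Y n O) := by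
    intro n O
    by_cases h : ∃ Y, CountablyManyClasses E Yᶜ ∧ CountablyManyClasses E (A Y n O)
    · obtain ⟨Y, hY, hYA⟩ := h
      exact ⟨Y, hY, fun _ _ _ => hYA⟩
    · exact ⟨univ, ⟨fun _ => 0, by simp⟩, fun Y' hY' hYA => absurd ⟨Y', hY', hYA⟩ h⟩
  choose Y0 hY0 hY0A using h1
  set Y1 := ⋂ n, ⋂ O, Y0 n O with hY1
  have hY1c : CountablyManyClasses E Y1ᶜ := by
    simp only [hY1, compl_iInter]
    exact .iUnion fun n => .iUnion fun O => hY0 n O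
  have hY1A : ∀ n O Y', CountablyManyClasses E Y'ᶜ → CountablyManyClasses E (A Y' n O) →
      CountablyManyClasses E (A Y1 n O) := fun n O Y' hc h =>
    (hY0A n O Y' hc h).mono (hA _ _ n O (iInter_subset_of_subset n (iInter_subset _ O)))
  set Bad := ⋃ p : {p : ℕ × 𝓑 // CountablyManyClasses E (A Y1 p.1 p.2)}, A Y1 p.1.1 p.1.2
    with hBad
  have hBadc : CountablyManyClasses E Bad := .iUnion fun p => p.2
  have hYc : CountablyManyClasses E (Y1 \ Bad)ᶜ := by
    rw [sdiff_eq, compl_inter, compl_compl]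
    exact hY1c.union hBadc
  refine ⟨Y1 \ Bad, ?_, ?_⟩
  · by_contra hemp
    rw [not_nonempty_iff_eq_empty] at hemp
    rw [hemp, compl_empty] at hYc
    exact hE hYc
  · rintro n O hO ⟨z, hz, hzO⟩
    obtain ⟨B, hB, hzB, hBO⟩ :=
      (TopologicalSpace.isBasis_countableBasis _).exists_subset_of_mem_open hzO hO
    have hnc : ¬ CountablyManyClasses E (A (Y1 \ Bad) n ⟨B, hB⟩) := by
      intro hc
      refine (hz.2 (D n) (hD n)).2 (mem_iUnion.2 ⟨⟨(n, ⟨B, hB⟩), hY1A n _ _ hYc hc⟩, ?_⟩)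
      exact ⟨z, ⟨Conf.mono sdiff_subset hz, hzB⟩, rfl⟩
    obtain ⟨_, ⟨z0, h0, rfl⟩, _, ⟨z1, h1, rfl⟩, h01⟩ :=
      exists_not_of_not_countablyManyClasses hnc
    exact ⟨z0, ⟨h0.1, hBO h0.2⟩, z1, ⟨h1.1, hBO h1.2⟩, h01⟩

theorem exists_conf_succ {E : (ℕ → ℕ) → (ℕ → ℕ) → Prop}
    (huv : ∀ x y, ¬ E x y → ∃ w, u w = x ∧ v w = y) {Y : Set (ℕ → ℕ)}
    (hY : ∀ n, ∀ O, IsOpen O → (Conf D u v Y n ∩ O).Nonempty →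
      ∃ z ∈ Conf D u v Y n ∩ O, ∃ z' ∈ Conf D u v Y n ∩ O, ¬ E (z.1 (D n)) (z'.1 (D n)))
    (n : ℕ) (γ : (List Bool → ℕ → ℕ) × (List Bool → ℕ → ℕ)) (hγ : γ ∈ Conf D u v Y n) :
    ∃ γ' ∈ Conf D u v Y (n + 1), ∀ i s, s.length ≤ n →
      γ'.1 (i :: s) ∈ cylinder (γ.1 s) n ∧ γ'.2 (i :: s) ∈ cylinder (γ.2 s) n := by
  set L : Set (List Bool) := {s | s.length ≤ n}
  have hL : L.Finite := List.finite_length_le Bool n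
  obtain ⟨z0, ⟨h0, h0O⟩, z1, ⟨h1, h1O⟩, h01⟩ := hY n
    ((L.pi fun s => cylinder (γ.1 s) n) ×ˢ (L.pi fun s => cylinder (γ.2 s) n))
    ((isOpen_set_pi hL fun s _ => isOpen_cylinder _ _ _).prod
      (isOpen_set_pi hL fun s _ => isOpen_cylinder _ _ _))
    ⟨γ, hγ, fun s _ => self_mem_cylinder _ _, fun s _ => self_mem_cylinder _ _⟩
  obtain ⟨w, hw0, hw1⟩ := huv _ _ h01
  let z : Bool → (List Bool → ℕ → ℕ) × (List Bool → ℕ → ℕ) := fun i => bif i then z1 else z0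
  have hz : ∀ i, z i ∈ Conf D u v Y n := by rintro (_ | _) <;> assumption
  have hzO : ∀ i, z i ∈ ((L.pi fun s => cylinder (γ.1 s) n) ×ˢ
      (L.pi fun s => cylinder (γ.2 s) n)) := by
    rintro (_ | _) <;> assumption
  refine ⟨(fun s => s.rec (fun _ => 0) fun i s _ => (z i).1 s,
    fun s => s.rec w fun i s _ => (z i).2 s), ⟨?_, ?_⟩, ?_⟩
  · rintro (_ | ⟨i, t⟩) ht
    · exact ⟨hw0, hw1⟩
    · have ht' : t.length < n := by simpa using ht
      have h2 := (hz i).1 t ht'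
      have h3 : n + 1 - 1 - (i :: t).length = n - 1 - t.length := by
        simp only [List.length_cons]; omega
      rw [h3]
      exact h2
  · rintro (_ | ⟨i, s⟩) hs
    · simp at hs
    · exact (hz i).2 s (by simpa using hs)
  · exact fun i s hs => ⟨(hzO i).1 s hs, (hzO i).2 s hs⟩

theorem exists_homomorphism {E : (ℕ → ℕ) → (ℕ → ℕ) → Prop} (hD : ∀ n, (D n).length = n)
    (hu : Continuous u) (hv : Continuous v) (huv : ∀ x y, ¬ E x y ↔ ∃ w, u w = x ∧ v w = y)
    (hE : ¬ CountablyManyClasses E univ) :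
    ∃ h : (ℕ → Bool) → ℕ → ℕ, Continuous h ∧ ∀ k β β', res β k = D k → res β' k = D k →
      β k = false → β' k = true → (∀ i, β (i + (k + 1)) = β' (i + (k + 1))) →
      ¬ E (h β) (h β') := by
  obtain ⟨Y, ⟨y, hy⟩, hY⟩ := exists_large_set (u := u) (v := v) hD hE
  choose! F hF hFc using exists_conf_succ (fun x y h => (huv x y).1 h) hY
  let N : ℕ → (List Bool → ℕ → ℕ) × (List Bool → ℕ → ℕ) := fun n =>
    Nat.rec (fun _ => y, fun _ => y) (fun n γ => F n γ) n
  have hN : ∀ n, N n ∈ Conf D u v Y n := by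
    intro n
    induction n with
    | zero => exact ⟨fun t ht => absurd ht (Nat.not_lt_zero _), fun s _ => hy⟩
    | succ n ih => exact hF n _ ih
  have hNc : ∀ n i s, s.length ≤ n → (N (n + 1)).1 (i :: s) ∈ cylinder ((N n).1 s) n ∧
      (N (n + 1)).2 (i :: s) ∈ cylinder ((N n).2 s) n := fun n => hFc n _ (hN n)
  let h : (ℕ → Bool) → ℕ → ℕ := fun β => diag fun n => (N n).1 (res β n)
  have hlim : ∀ β, Tendsto (fun n => (N n).1 (res β n)) atTop (𝓝 (h β)) := fun β =>
    tendsto_diag (m := id) (fun n => le_rfl) monotone_id fun n i hi =>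
      mem_cylinder_iff.1 (hNc n (β n) (res β n) (res_length _ _).le).1 i hi
  refine ⟨h, continuous_pi fun i => continuous_comp_res (fun s => (N (i + 1)).1 s i) (i + 1), ?_⟩
  intro k β β' hβ hβ' hf ht hsh
  set δ : ℕ → Bool := fun i => β (i + (k + 1)) with hδ
  have hδ' : (fun i => β' (i + (k + 1))) = δ := funext fun i => (hsh i).symm
  set ω : ℕ → ℕ → ℕ := fun j => (N (j + (k + 1))).2 (res δ j) with hω
  have hωlim : Tendsto ω atTop (𝓝 (diag ω)) := by
    refine tendsto_diag (m := fun j => j + (k + 1)) (fun n => Nat.le_add_right _ _)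
      (fun a b hab => Nat.add_le_add_right hab _) fun j i hi => ?_
    have := (hNc (j + (k + 1)) (δ j) (res δ j) (by rw [res_length]; omega)).2
    have h2 := mem_cylinder_iff.1 this i hi
    simp only [hω, res_succ, Nat.add_right_comm j 1 (k + 1)]
    exact h2
  have hconf : ∀ j, u (ω j) = (N (j + (k + 1))).1 (res β (j + (k + 1))) ∧
      v (ω j) = (N (j + (k + 1))).1 (res β' (j + (k + 1))) := by
    intro j
    have h2 := (hN (j + (k + 1))).1 (res δ j) (by rw [res_length]; omega)
    have h3 : j + (k + 1) - 1 - (res δ j).length = k := by rw [res_length]; omega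
    rw [h3] at h2
    rw [res_add β j (k + 1), res_add β' j (k + 1), hδ', res_succ, res_succ, hβ, hβ', hf, ht]
    exact h2
  refine (huv _ _).2 ⟨diag ω, ?_, ?_⟩
  · refine tendsto_nhds_unique ((hu.tendsto _).comp hωlim) ?_
    refine (((hlim β).comp (tendsto_add_atTop_nat (k + 1)))).congr fun j => ?_
    exact (hconf j).1.symm
  · refine tendsto_nhds_unique ((hv.tendsto _).comp hωlim) ?_
    refine (((hlim β').comp (tendsto_add_atTop_nat (k + 1)))).congr fun j => ?_
    exact (hconf j).2.symm

end Configurations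

/-- Flipping one bit, as a homeomorphism of the Cantor space. -/
def flipAt (k : ℕ) : (ℕ → Bool) ≃ₜ (ℕ → Bool) where
  toFun β := Function.update β k (!β k)
  invFun β := Function.update β k (!β k)
  left_inv β := by simp
  right_inv β := by simp
  continuous_toFun := continuous_id.update k
    ((continuous_of_discreteTopology (f := not)).comp (continuous_apply k))
  continuous_invFun := continuous_id.update k
    ((continuous_of_discreteTopology (f := not)).comp (continuous_apply k))

theorem flipAt_apply (k : ℕ) (β : ℕ → Bool) : flipAt k β = Function.update β k (!β k) := rfl

theorem res_flipAt (k : ℕ) (β : ℕ → Bool) : res (flipAt k β) k = res β k :=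
  res_eq_of_mem_cylinder (update_mem_cylinder' β le_rfl _)

theorem silver {E : (ℕ → ℕ) → (ℕ → ℕ) → Prop} (hEq : Equivalence E)
    (hE : MeasurableSet {p : (ℕ → ℕ) × (ℕ → ℕ) | E p.1 p.2}) :
    CountablyManyClasses E univ ∨
      ∃ c : (ℕ → Bool) → ℕ → ℕ, Continuous c ∧ ∀ α β, α ≠ β → ¬ E (c α) (c β) := by
  by_cases hcm : CountablyManyClasses E univ
  · exact Or.inl hcm
  right
  obtain ⟨D, hD, hDs⟩ := exists_dense_lists
  obtain ⟨u, v, hu, hv, huv⟩ : ∃ u v : (ℕ → ℕ) → ℕ → ℕ, Continuous u ∧ Continuous v ∧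
      ∀ x y, ¬ E x y ↔ ∃ w, u w = x ∧ v w = y := by
    have han := hE.compl.analyticSet
    rw [AnalyticSet] at han
    rcases han with h | ⟨f, hf, hfr⟩
    · obtain ⟨x, -, y, -, hxy⟩ := exists_not_of_not_countablyManyClasses hcm
      exact absurd (show (x, y) ∈ {p : (ℕ → ℕ) × (ℕ → ℕ) | E p.1 p.2}ᶜ from hxy) (h ▸ id)
    · refine ⟨fun w => (f w).1, fun w => (f w).2, continuous_fst.comp hf, continuous_snd.comp hf,
        fun x y => ?_⟩
      have h1 : (x, y) ∈ range f ↔ ¬ E x y := by rw [hfr]; rfl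
      rw [← h1, mem_range]
      simp only [Prod.ext_iff]
  obtain ⟨h, hh, hhE⟩ := exists_homomorphism hD hu hv huv hcm
  have hE' : MeasurableSet {p : (ℕ → Bool) × (ℕ → Bool) | E (h p.1) (h p.2)} :=
    ((hh.comp continuous_fst).prodMk (hh.comp continuous_snd)).measurable hE
  have hflip : ∀ k β, res β k = D k → ¬ E (h β) (h (flipAt k β)) := by
    intro k β hβ
    have h1 : res (flipAt k β) k = D k :=
      (res_flipAt k β).trans hβ
    have h2 : ∀ i, flipAt k β (i + (k + 1)) = β (i + (k + 1)) := fun i => by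
      rw [flipAt_apply, Function.update_of_ne (by omega)]
    have h3 : flipAt k β k = !β k := by rw [flipAt_apply, Function.update_self]
    cases hb : β k with
    | false => exact hhE k _ _ hβ h1 hb (by rw [h3, hb]; rfl) fun i => (h2 i).symm
    | true =>
      exact fun hc => hhE k _ _ h1 hβ (by rw [h3, hb]; rfl) hb h2 (hEq.symm hc)
  have hsec : ∀ β₀, IsMeagre {β | (β₀, β) ∈ {p : (ℕ → Bool) × (ℕ → Bool) | E (h p.1) (h p.2)}} := by
    intro β₀
    set S := {β | (β₀, β) ∈ {p : (ℕ → Bool) × (ℕ → Bool) | E (h p.1) (h p.2)}} with hS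
    have hSm : MeasurableSet S := (Continuous.prodMk_right β₀).measurable hE'
    obtain ⟨O, hO, h1, h2⟩ := exists_isOpen_isMeagre_diff hSm.baireMeasurableSet
    rcases O.eq_empty_or_nonempty with rfl | ⟨β, hβ⟩
    · simpa using h1
    exfalso
    obtain ⟨n, hn⟩ := exists_cylinder_subset (hO.mem_nhds hβ)
    obtain ⟨k, t, ht⟩ := hDs (res β n)
    have hk : k = t.length + n := by
      have := congrArg List.length ht
      rw [List.length_append, res_length, hD] at this
      exact this.symm
    have hCO : {γ | res γ k = D k} ⊆ O := by
      intro γ hγ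
      refine hn ?_
      rw [cylinder_eq_res]
      have h3 : res γ k = D k := hγ
      rw [hk, res_add, ← hk, ← ht] at h3
      exact (List.append_inj h3 (res_length _ _)).2
    have hCn : ({γ | res γ k = D k} : Set (ℕ → Bool)).Nonempty := by
      have : ∀ s : List Bool, ∃ γ : ℕ → Bool, res γ s.length = s := by
        intro s
        induction s with
        | nil => exact ⟨fun _ => false, rfl⟩
        | cons i s ih =>
          obtain ⟨γ, hγ⟩ := ih
          refine ⟨Function.update γ s.length i, ?_⟩
          rw [List.length_cons, res_succ, Function.update_self,
            res_eq_of_mem_cylinder (update_mem_cylinder' γ le_rfl i), hγ]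
      obtain ⟨γ, hγ⟩ := this (D k)
      rw [hD] at hγ
      exact ⟨γ, hγ⟩
    have hCo : IsOpen ({γ | res γ k = D k} : Set (ℕ → Bool)) := by
      refine isOpen_iff_mem_nhds.2 fun γ hγ => ?_
      refine mem_of_superset ((isOpen_cylinder _ γ k).mem_nhds (self_mem_cylinder _ _))
        fun c hc => ?_
      exact (res_eq_of_mem_cylinder hc).trans hγ
    refine not_isMeagre_of_isOpen hCo hCn ((h2.union
      (h2.preimage_of_isOpenMap (flipAt k).continuous (flipAt k).isOpenMap)).mono ?_)
    intro γ hγ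
    have h1 : res (flipAt k γ) k = D k :=
      (res_flipAt k γ).trans hγ
    by_cases hγS : γ ∈ S
    · by_cases hγS' : flipAt k γ ∈ S
      · exact absurd (hEq.trans (hEq.symm hγS) hγS') (hflip k γ hγ)
      · exact Or.inr ⟨hCO h1, hγS'⟩
    · exact Or.inl ⟨hCO hγ, hγS⟩
  have hmeagre := isMeagre_of_isMeagre_section hE'.baireMeasurableSet hsec
  obtain ⟨c, hc, hcR⟩ := exists_continuous_pairwise_mem hmeagre
  exact ⟨fun α => h (c α), hh.comp hc, fun α β hαβ => hcR α β hαβ⟩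

section CylinderConditions

variable {X : Type*} [TopologicalSpace X] {u v : X → ℕ → ℕ} {m : X → ℕ}

theorem isOpen_mem_cylinder (hu : Continuous u) (hv : Continuous v) (hm : Continuous m) :
    IsOpen {x | u x ∈ cylinder (v x) (m x)} := by
  refine isOpen_iff_mem_nhds.2 fun x hx => ?_
  have h1 : ∀ᶠ y in 𝓝 x, m y = m x :=
    hm.continuousAt.preimage_mem_nhds ((isOpen_discrete {m x}).mem_nhds rfl)
  have h2 : ∀ᶠ y in 𝓝 x, ∀ i ∈ Set.Iio (m x), u y i = v y i := by
    refine (eventually_all_finite (Set.finite_Iio _)).2 fun i hi => ?_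
    refine IsOpen.mem_nhds (s := {y | u y i = v y i}) ?_ (mem_cylinder_iff.1 hx i hi)
    exact (isOpen_discrete {p : ℕ × ℕ | p.1 = p.2}).preimage
      (((continuous_apply i).comp hu).prodMk ((continuous_apply i).comp hv))
  filter_upwards [h1, h2] with y hy1 hy2
  refine mem_cylinder_iff.2 fun i hi => hy2 i ?_
  rwa [hy1] at hi

theorem isClosed_mem_cylinder (hu : Continuous u) (hv : Continuous v) (hm : Continuous m) :
    IsClosed {x | u x ∈ cylinder (v x) (m x)} := by
  simp only [mem_cylinder_iff, imp_iff_not_or, ofPred_forall]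
  refine isClosed_iInter fun i => IsClosed.union ?_ ?_
  · exact (isClosed_discrete {k | ¬ i < k}).preimage hm
  · exact isClosed_eq ((continuous_apply i).comp hu) ((continuous_apply i).comp hv)

end CylinderConditions

/-- The tuples `(b, m, l)` describing a scheme for `q₂` inside a single fibre of `q₁`. -/
def fibreSchemes (q₁ q₂ : (ℕ → ℕ) → ℕ → ℕ) :
    Set ((List ℕ → ℕ → ℕ) × (List ℕ → ℕ) × (List ℕ → ℕ)) :=
  {τ | IsScheme q₂ τ.1 τ.2.1 τ.2.2 ∧ ∀ s, q₁ (τ.1 s) = q₁ (τ.1 [])}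

theorem isClosed_fibreSchemes {q₁ q₂ : (ℕ → ℕ) → ℕ → ℕ} (hq₁ : Continuous q₁) :
    IsClosed (fibreSchemes q₁ q₂) := by
  have hb : ∀ s, Continuous fun τ : (List ℕ → ℕ → ℕ) × (List ℕ → ℕ) × (List ℕ → ℕ) => τ.1 s :=
    fun s => (continuous_apply s).comp continuous_fst
  have hm : ∀ s, Continuous fun τ : (List ℕ → ℕ → ℕ) × (List ℕ → ℕ) × (List ℕ → ℕ) => τ.2.1 s :=
    fun s => (continuous_apply s).comp (continuous_fst.comp continuous_snd)
  have hl : ∀ s, Continuous fun τ : (List ℕ → ℕ → ℕ) × (List ℕ → ℕ) × (List ℕ → ℕ) => τ.2.2 s :=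
    fun s => (continuous_apply s).comp (continuous_snd.comp continuous_snd)
  have h : fibreSchemes q₁ q₂ =
      (({τ | ∀ s k, τ.1 (k :: s) ∈ cylinder (τ.1 s) (τ.2.1 s)} ∩
        {τ | ∀ s k, τ.2.1 s < τ.2.1 (k :: s)}) ∩
        {τ | ∀ s k k', ∀ c c', c ∈ cylinder (τ.1 (k :: s)) (τ.2.1 (k :: s)) →
          c' ∈ cylinder (τ.1 (k' :: s)) (τ.2.1 (k' :: s)) →
          (q₂ c (τ.2.2 s) = q₂ c' (τ.2.2 s) → k = k')}) ∩
        {τ | ∀ s, q₁ (τ.1 s) = q₁ (τ.1 [])} := by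
    ext τ
    exact ⟨fun ⟨⟨h1, h2, h3⟩, h4⟩ =>
      ⟨⟨⟨h1, h2⟩, fun s k k' c c' hc hc' => h3 s k k' c hc c' hc'⟩, h4⟩,
      fun ⟨⟨⟨h1, h2⟩, h3⟩, h4⟩ =>
      ⟨⟨h1, h2, fun s k k' c hc c' hc' => h3 s k k' c c' hc hc'⟩, h4⟩⟩
  rw [h]
  refine (((?_ : IsClosed _).inter ?_).inter ?_).inter ?_
  · simp only [ofPred_forall]
    exact isClosed_iInter fun s => isClosed_iInter fun k =>
      isClosed_mem_cylinder (hb _) (hb _) (hm _)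
  · simp only [ofPred_forall]
    exact isClosed_iInter fun s => isClosed_iInter fun k =>
      (isClosed_discrete {p : ℕ × ℕ | p.1 < p.2}).preimage ((hm s).prodMk (hm (k :: s)))
  · simp only [ofPred_forall]
    refine isClosed_iInter fun s => isClosed_iInter fun k => isClosed_iInter fun k' =>
      isClosed_iInter fun c => isClosed_iInter fun c' => ?_
    refine isClosed_imp (isOpen_mem_cylinder continuous_const (hb _) (hm _)) ?_
    refine isClosed_imp (isOpen_mem_cylinder continuous_const (hb _) (hm _)) ?_
    exact (isClosed_discrete {j | q₂ c j = q₂ c' j → k = k'}).preimage (hl s)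
  · simp only [ofPred_forall]
    exact isClosed_iInter fun s => isClosed_eq (hq₁.comp (hb s)) (hq₁.comp (hb []))

theorem continuous_uncurry_branchPt :
    Continuous fun p : (List ℕ → ℕ → ℕ) × (ℕ → ℕ) => branchPt p.1 p.2 := by
  refine continuous_pi fun i => continuous_iff_continuousAt.2 fun p => ?_
  have h : Continuous fun r : (List ℕ → ℕ → ℕ) × (ℕ → ℕ) => r.1 (res p.2 (i + 1)) i :=
    (continuous_apply i).comp ((continuous_apply _).comp continuous_fst)
  refine h.continuousAt.congr ?_
  have h2 : ∀ᶠ r : (List ℕ → ℕ → ℕ) × (ℕ → ℕ) in 𝓝 p, r.2 ∈ cylinder p.2 (i + 1) :=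
    continuous_snd.continuousAt.preimage_mem_nhds
      ((isOpen_cylinder _ p.2 (i + 1)).mem_nhds (self_mem_cylinder _ _))
  filter_upwards [h2] with r hr
  rw [← res_eq_of_mem_cylinder hr]
  rfl

theorem IsScheme.branchPt_fibre {g q : (ℕ → ℕ) → ℕ → ℕ} (hq : Continuous q)
    {b : List ℕ → ℕ → ℕ} {m l : List ℕ → ℕ} (h : IsScheme g b m l)
    (hb : ∀ s, q (b s) = q (b [])) (α : ℕ → ℕ) : q (branchPt b α) = q (b []) := by
  have hm : StrictMono fun n => m (res α n) := strictMono_nat_of_lt_succ fun n => h.lt _ _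
  have hcl : IsClosed {z | q z = q (b [])} := isClosed_eq hq continuous_const
  refine hcl.closure_subset (mem_closure_iff_nhds.2 fun U hU => ?_)
  obtain ⟨n, hn⟩ := exists_cylinder_subset hU
  refine ⟨b (res α n), hn ?_, hb _⟩
  exact cylinder_anti _ (hm.id_le n) ((mem_cylinder_comm _ _ _).1 (branchPt_mem h.mem h.lt α n))

/-- Some superperfect subset of `A` consists of pairwise `E`-inequivalent points. -/
def HasSuperperfect (E : (ℕ → ℕ) → (ℕ → ℕ) → Prop) (A : Set (ℕ → ℕ)) : Prop :=
  ∃ p : (ℕ → ℕ) → ℕ → ℕ, Superp p ∧ (∀ α, p α ∈ A) ∧ ∀ α β, α ≠ β → ¬ E (p α) (p β)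

theorem hasSuperperfect_or_countable_schemes {E : (ℕ → ℕ) → (ℕ → ℕ) → Prop}
    (hEq : Equivalence E) (hE : MeasurableSet {p : (ℕ → ℕ) × (ℕ → ℕ) | E p.1 p.2})
    {q₁ q₂ : (ℕ → ℕ) → ℕ → ℕ} (hq₁ : Continuous q₁) (hq₂ : Continuous q₂)
    (hq : ∀ b, E (q₁ b) (q₂ b)) :
    HasSuperperfect E (range q₂) ∨
      ∃ d : ℕ → ℕ → ℕ, ∀ τ ∈ fibreSchemes q₁ q₂, ∃ n, E (d n) (q₁ (τ.1 [])) := by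
  have : PolishSpace ((List ℕ → ℕ → ℕ) × (List ℕ → ℕ) × (List ℕ → ℕ)) := ⟨⟩
  have han : AnalyticSet (fibreSchemes q₁ q₂) := (isClosed_fibreSchemes hq₁).analyticSet
  rw [AnalyticSet] at han
  rcases han with h0 | ⟨θ, hθ, hr⟩
  · exact Or.inr ⟨fun _ => 0, by simp [h0]⟩
  have hθm : ∀ a, θ a ∈ fibreSchemes q₁ q₂ := fun a => hr ▸ mem_range_self a
  have hroot : Continuous fun a => q₁ ((θ a).1 []) :=
    hq₁.comp ((continuous_apply []).comp (continuous_fst.comp hθ))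
  have hEq' : Equivalence fun a a' => E (q₁ ((θ a).1 [])) (q₁ ((θ a').1 [])) :=
    ⟨fun _ => hEq.refl _, fun h => hEq.symm h, fun h h' => hEq.trans h h'⟩
  have hE' : MeasurableSet {p : (ℕ → ℕ) × (ℕ → ℕ) |
      E (q₁ ((θ p.1).1 [])) (q₁ ((θ p.2).1 []))} :=
    ((hroot.measurable.comp measurable_fst).prodMk (hroot.measurable.comp measurable_snd)) hE
  rcases silver hEq' hE' with ⟨f, hf⟩ | ⟨c, hc, hcE⟩
  · refine Or.inr ⟨fun n => q₁ ((θ (f n)).1 []), fun τ hτ => ?_⟩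
    rw [← hr] at hτ
    obtain ⟨a, rfl⟩ := hτ
    exact hf a (mem_univ _)
  · left
    have hθc : Continuous fun y => θ (c y) := hθ.comp hc
    obtain ⟨Y, a, hY, hp⟩ := exists_transversal
      (Ψ := fun y α => q₂ (branchPt (θ (c y)).1 α)) (l := fun y s => (θ (c y)).2.2 s)
      (hq₂.comp (continuous_uncurry_branchPt.comp
        ((continuous_fst.comp (hθc.comp continuous_fst)).prodMk continuous_snd)))
      (fun s => (continuous_apply s).comp
        (continuous_snd.comp (continuous_snd.comp hθc)))
      (fun y β γ n hn h => by
        have hs := (hθm (c y)).1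
        have h1 := branchPt_mem hs.mem hs.lt β (n + 1)
        have h2 := branchPt_mem hs.mem hs.lt γ (n + 1)
        rw [res_succ] at h1 h2
        rw [← hn] at h2
        exact hs.split _ _ _ _ h1 _ h2 h)
    refine ⟨_, hp, fun α => mem_range_self _, fun α β hαβ h => ?_⟩
    have key : ∀ α, E (q₁ ((θ (c (Y α))).1 [])) (q₂ (branchPt (θ (c (Y α))).1 (a α))) := by
      intro α
      have hs := hθm (c (Y α))
      rw [← hs.1.branchPt_fibre hq₁ hs.2 (a α)]
      exact hq _
    exact hcE _ _ (hY.ne hαβ) (hEq.trans (key α) (hEq.trans h (hEq.symm (key β))))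

theorem hasSuperperfect_of_sigmaBdd_sections {E : (ℕ → ℕ) → (ℕ → ℕ) → Prop}
    (hEq : Equivalence E) (hE : MeasurableSet {p : (ℕ → ℕ) × (ℕ → ℕ) | E p.1 p.2})
    {A : Set (ℕ → ℕ)} (hA : AnalyticSet A) (hnA : ¬ SigmaBdd A)
    (hsec : ∀ x ∈ A, SigmaBdd {z | z ∈ A ∧ E x z}) : HasSuperperfect E A := by
  have hA' := hA
  rw [AnalyticSet] at hA'
  rcases hA' with rfl | ⟨f, hf, hfr⟩
  · exact absurd ⟨0, by simp⟩ hnA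
  have hfA : ∀ a, f a ∈ A := fun a => hfr ▸ mem_range_self a
  set F : Set (ℕ → ℕ) := {a | ∀ n, ¬ SigmaBdd (f '' cylinder a n)} with hF
  have hFc : IsClosed F := by
    refine ⟨isOpen_iff_mem_nhds.2 fun a ha => ?_⟩
    obtain ⟨n, hn⟩ : ∃ n, SigmaBdd (f '' cylinder a n) := by
      by_contra! h
      exact ha h
    refine mem_of_superset ((isOpen_cylinder _ a n).mem_nhds (self_mem_cylinder _ _))
      fun c hc hcF => hcF n ?_
    rwa [mem_cylinder_iff_eq.1 hc]
  have hkey : ∀ D, ¬ SigmaBdd (f '' D) → ¬ SigmaBdd (f '' (F ∩ D)) := by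
    refine fun D hD h => hD ((h.union (sigmaBdd_image_of_locally (g := f) (C := univ))).mono ?_)
    rintro _ ⟨b, hb, rfl⟩
    by_cases hbF : b ∈ F
    · exact Or.inl ⟨b, ⟨hbF, hb⟩, rfl⟩
    · right
      obtain ⟨n, hn⟩ : ∃ n, SigmaBdd (f '' cylinder b n) := by
        by_contra! h
        exact hbF h
      exact ⟨b, ⟨mem_univ _, n, by rwa [univ_inter]⟩, rfl⟩
  have hunb : ∀ U : Set F, IsOpen U → U.Nonempty → ∃ i, ∀ M, ∃ y ∈ U, M < f y.1 i := by
    rintro U hU ⟨y, hy⟩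
    obtain ⟨V, hV, rfl⟩ := isOpen_induced_iff.1 hU
    obtain ⟨n, hn⟩ := exists_cylinder_subset (hV.mem_nhds hy)
    obtain ⟨i, hi⟩ := exists_unbounded_of_not_sigmaBdd (hkey _ (y.2 n))
    refine ⟨i, fun M => ?_⟩
    obtain ⟨c, hc, hM⟩ := hi M
    exact ⟨⟨c, hc.1⟩, hn hc.2, hM⟩
  have hFne : Nonempty F := by
    rw [← hfr, ← image_univ] at hnA
    obtain ⟨l, hl⟩ := exists_unbounded_of_not_sigmaBdd (hkey _ hnA)
    obtain ⟨c, hc, -⟩ := hl 0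
    exact ⟨⟨c, hc.1⟩⟩
  have hFp : PolishSpace F := hFc.polishSpace
  have hFb : BaireSpace F := by
    let _ := TopologicalSpace.upgradeIsCompletelyMetrizable F
    infer_instance
  have hfv : Continuous fun y : F => f y.1 := hf.comp continuous_subtype_val
  have hS : AnalyticSet {p : F × (ℕ → ℕ) | p.2 ∈ A ∧ E (f p.1.1) p.2} := by
    have h1 : AnalyticSet {p : F × (ℕ → ℕ) | p.2 ∈ A} := hA.preimage continuous_snd
    have h2 : AnalyticSet {p : F × (ℕ → ℕ) | E (f p.1.1) p.2} :=
      hE.analyticSet.preimage ((hfv.comp continuous_fst).prodMk continuous_snd)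
    have h3 := AnalyticSet.iInter (s := fun i : Bool => bif i then
      {p : F × (ℕ → ℕ) | p.2 ∈ A} else {p : F × (ℕ → ℕ) | E (f p.1.1) p.2})
      (fun i => by cases i <;> assumption)
    rwa [← inter_eq_iInter] at h3
  rw [AnalyticSet] at hS
  rcases hS with h0 | ⟨q, hq, hqr⟩
  · obtain ⟨y⟩ := hFne
    have : (y, f y.1) ∈ {p : F × (ℕ → ℕ) | p.2 ∈ A ∧ E (f p.1.1) p.2} := ⟨hfA _, hEq.refl _⟩
    simp [h0] at this
  have hqm : ∀ b, (q b).2 ∈ A ∧ E (f (q b).1.1) (q b).2 := fun b => by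
    have : q b ∈ {p : F × (ℕ → ℕ) | p.2 ∈ A ∧ E (f p.1.1) p.2} := hqr ▸ mem_range_self b
    exact this
  obtain ⟨φ, G, hG, hφ, hφb⟩ := unifBdd_univ_of_fibres (q₁ := fun b => (q b).1)
    (q₂ := fun b => (q b).2) (continuous_fst.comp hq) (continuous_snd.comp hq) (by
      refine fun y => (hsec (f y.1) (hfA _)).mono ?_
      rintro _ ⟨b, rfl, rfl⟩
      exact hqm b)
  obtain ⟨G₀, hG₀G, hG₀δ, hG₀d⟩ := mem_residual.1 hG
  have hG₀ : AnalyticSet G₀ := by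
    borelize (↥F)
    exact hG₀δ.measurableSet.analyticSet
  rw [AnalyticSet] at hG₀
  rcases hG₀ with h0 | ⟨θ, hθ, hθr⟩
  · exact absurd h0 hG₀d.nonempty.ne_empty
  have hθG : ∀ a, θ a ∈ G₀ := fun a => hθr ▸ mem_range_self a
  have hgn : ¬ SigmaBdd ((fun a => f (θ a).1) '' univ) := by
    rintro ⟨ψ, hψ⟩
    refine not_exists_generic_bound hfv hunb (residual_of_dense_Gδ hG₀δ hG₀d) ψ fun y hy => ?_
    rw [← hθr] at hy
    obtain ⟨a, rfl⟩ := hy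
    exact hψ _ ⟨a, mem_univ _, rfl⟩
  have hg : Continuous fun a => f (θ a).1 := hfv.comp hθ
  obtain ⟨b, m, l, hs, -, hdom⟩ := exists_scheme hg
    (hφ.comp_continuous hθ fun a => hG₀G (hθG a)) hgn
  refine ⟨_, hs.superp hg, fun α => hfA _, fun α β hαβ hαE => ?_⟩
  obtain ⟨c, hc⟩ : (θ (branchPt b β), f (θ (branchPt b α)).1) ∈ range q := by
    rw [hqr]
    exact ⟨hfA _, hEq.symm hαE⟩
  refine hdom α β hαβ ?_
  have h := hφb c (mem_univ _)
  simp only [hc] at h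
  filter_upwards [h (hG₀G (hθG _))] with i hi
  exact not_lt.2 hi

end SuperperfectDichotomy

open SuperperfectDichotomy

theorem stmt_15 (E : (ℕ → ℕ) → (ℕ → ℕ) → Prop) (hEquiv : Equivalence E)
    (hE : MeasurableSet {p : (ℕ → ℕ) × (ℕ → ℕ) | E p.1 p.2})
    (A : Set (ℕ → ℕ)) (hA : MeasureTheory.AnalyticSet A) :
    (∃ f : ℕ → (ℕ → ℕ), ∃ B : Set (ℕ → ℕ),
      (∃ K : ℕ → Set (ℕ → ℕ), (∀ n, IsCompact (K n)) ∧ B ⊆ ⋃ n, K n) ∧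
      A ⊆ B ∪ ⋃ n, {x : ℕ → ℕ | E (f n) x}) ∨
    (∃ P : Set (ℕ → ℕ), P ⊆ A ∧ IsClosed P ∧ Nonempty (P ≃ₜ (ℕ → ℕ)) ∧
      ∀ x ∈ P, ∀ y ∈ P, x ≠ y → ¬ E x y) := by
  suffices h : (∃ f : ℕ → ℕ → ℕ, SigmaBdd (A \ ⋃ n, {x | E (f n) x})) ∨ HasSuperperfect E A by
    rcases h with ⟨f, hf⟩ | ⟨p, hp, hpA, hpE⟩
    · exact Or.inl ⟨f, _, hf.exists_isCompact, by simp⟩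
    · refine Or.inr ⟨range p, range_subset_iff.2 hpA, hp.isClosed_range, hp.nonempty_homeomorph, ?_⟩
      rintro _ ⟨α, rfl⟩ _ ⟨β, rfl⟩ hne
      exact hpE α β fun h => hne (h ▸ rfl)
  have hS : AnalyticSet {p : (ℕ → ℕ) × (ℕ → ℕ) | (p.1 ∈ A ∧ p.2 ∈ A) ∧ E p.1 p.2} := by
    have h := AnalyticSet.iInter (s := fun i : Option Bool => i.elim
      {p : (ℕ → ℕ) × (ℕ → ℕ) | E p.1 p.2} fun j => bif j then Prod.fst ⁻¹' A else Prod.snd ⁻¹' A) (by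
        rintro (_ | _ | _)
        exacts [hE.analyticSet, hA.preimage continuous_snd, hA.preimage continuous_fst])
    convert h using 1
    ext p
    simp [Option.forall, and_comm]
  rw [AnalyticSet] at hS
  rcases hS with h0 | ⟨q, hq, hqr⟩
  · refine Or.inl ⟨fun _ => 0, 0, fun x hx => ?_⟩
    exact absurd (show (x, x) ∈ (∅ : Set _) from h0 ▸ ⟨⟨hx.1, hx.1⟩, hEquiv.refl x⟩) (by simp)
  have hqm : ∀ b, ((q b).1 ∈ A ∧ (q b).2 ∈ A) ∧ E (q b).1 (q b).2 := fun b => by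
    have : q b ∈ {p : (ℕ → ℕ) × (ℕ → ℕ) | (p.1 ∈ A ∧ p.2 ∈ A) ∧ E p.1 p.2} :=
      hqr ▸ mem_range_self b
    exact this
  have hq₁ : Continuous fun b => (q b).1 := continuous_fst.comp hq
  have hq₂ : Continuous fun b => (q b).2 := continuous_snd.comp hq
  rcases hasSuperperfect_or_countable_schemes hEquiv hE hq₁ hq₂ fun b => (hqm b).2 with
    ⟨p, hp, hpq, hpE⟩ | ⟨d, hd⟩
  · refine Or.inr ⟨p, hp, fun α => ?_, hpE⟩
    obtain ⟨b, hb⟩ := hpq α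
    exact hb ▸ (hqm b).1.2
  by_cases hA' : SigmaBdd (A \ ⋃ n, {x | E (d n) x})
  · exact Or.inl ⟨d, hA'⟩
  right
  have hdE : MeasurableSet (⋃ n, {x | E (d n) x})ᶜ :=
    (MeasurableSet.iUnion fun n => measurable_prodMk_left hE).compl
  have han : AnalyticSet (A \ ⋃ n, {x | E (d n) x}) := by
    have h := AnalyticSet.iInter (s := fun i : Bool => bif i then A else (⋃ n, {x | E (d n) x})ᶜ)
      (fun i => by cases i; exacts [hdE.analyticSet, hA])
    rwa [← inter_eq_iInter] at h
  obtain ⟨p, hp, hpA, hpE⟩ := hasSuperperfect_of_sigmaBdd_sections hEquiv hE han hA' (by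
    intro x hx
    by_contra hcon
    have hfib : ¬ SigmaBdd ((fun b => (q b).2) '' {b | (q b).1 = x}) := by
      refine fun h => hcon (h.mono ?_)
      rintro z ⟨hz, hxz⟩
      obtain ⟨b, hb⟩ : (x, z) ∈ range q := by
        rw [hqr]
        exact ⟨⟨hx.1, hz.1⟩, hxz⟩
      exact ⟨b, by simp [hb], by simp [hb]⟩
    obtain ⟨b, m, l, hs, hb, -⟩ := exists_scheme hq₂ (φ := fun _ => 0) continuous_const hfib
    obtain ⟨n, hn⟩ := hd (b, m, l) ⟨hs, fun s => (hb s).trans (hb []).symm⟩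
    refine hx.2 (mem_iUnion.2 ⟨n, ?_⟩)
    have h1 : (q (b [])).1 = x := hb []
    rw [← h1]
    exact hn)
  exact ⟨p, hp, fun α => (hpA α).1, hpE⟩
end
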